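/- arXiv:2602.19195 — 4 statements merged into one kernel-verified Lean document; each statement's English description precedes it below -/
import Mathlib

section
/- For all nonnegative integers a and b, the multiple zeta value H(a,b) = ζ({2}^a, 3, {2}^b) satisfies H(a,b) = (-4·π^{2a+2b+2}/(2a+2)!) · Σ_{n=0}^{∞} ζ(2n) / ((2n+2a+2)(2n+2a+3)···(2n+2a+2b+3)·2^{2n}), where ζ denotes the Riemann zeta function (with ζ(0) = -1/2 given by analytic continuation). -/
/-!
The multiple zeta value is turned into a single integral containing a cotangent, and the cotangent is
then expanded into `∑ ζ(2n) z^{2n}`.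

With `c_k = 4^k / (2k choose k)` and `φ_m(x) = (2x)^m / m!`, put
`M(k, m, s) = ∫₀ˢ sin^{2k} t · φ_m(s - t) dt`. As the second derivative of `φ_{m+2}` is `4 φ_m`, integrating by parts twice
gives (`moment_rec`)
`c_k / k² · M(k, m, s) = c_{k-1} M(k-1, m+2, s) - c_k M(k, m+2, s)`,
so that summation over `k > N` telescopes to `c_N M(N, m+2, s)`. Starting from Wallis' integral,
this represents the tail sums of `{2}^b` by `(2/π) c_N M(N, 2b, π/2)` (`tailSum_twos`). One more factor
`1/k` is absorbed by a single integration by parts, which produces the kernel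
`cot s · φ_{2b+1}(π/2 - s)` integrated against `sin^{2k} s`. The sums to the left of the entry `3` are
then performed under the integral sign by the same telescoping (`tailSum_three`), which for `N = 0`
yields
`H(a, b) = (2/π) ∫₀^{π/2} cot s · φ_{2b+1}(π/2 - s) φ_{2a+2}(s) ds` (`mzv_eq_integral`).
All sums and integrals up to this point have nonnegative terms and are taken in `[0, ∞]`, so no
convergence needs to be checked before exchanging them.

After `s = πx/2`, inserting `πz cot(πz) = -2 ∑ ζ(2n) z^{2n}` at `z = x/2` (`hasSum_zeta_cot`) and
integrating termwise leaves the Beta integrals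
`∫₀¹ x^{2n+2a+1} (1-x)^{2b+1} dx = (2b+1)! / ((2n+2a+2) ⋯ (2n+2a+2b+3))` (`integral_beta`).
-/

open Real Finset

/-- The multiple zeta value `ζ(s₁,…,s_r) = ∑_{1 ≤ k₁ < ⋯ < k_r} ∏ 1/k_i^{s_i}`,
encoded via strictly increasing functions `f : Fin r → ℕ` with `k_i = f i + 1`. -/
noncomputable def mzv (s : List ℕ) : ℝ :=
  ∑' f : {f : Fin s.length → ℕ // StrictMono f},
    ∏ i, (1 : ℝ) / ((f.1 i + 1 : ℕ) : ℝ) ^ (s.get i)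

/-- `H(a,b) = ζ({2}^a, 3, {2}^b)`. -/
noncomputable def H (a b : ℕ) : ℝ :=
  mzv (List.replicate a 2 ++ 3 :: List.replicate b 2)

namespace Lupu
open MeasureTheory Filter Topology

/-! ### Weighted moments of powers of the sine -/

/-- The divided power `(2x)^m / m!`; the second derivative of `phi (m + 2)` is `4 * phi m`. -/
noncomputable def phi (m : ℕ) (x : ℝ) : ℝ := (2 * x) ^ m / (m.factorial : ℝ)

lemma phi_zero (x : ℝ) : phi 0 x = 1 := by simp [phi]

lemma phi_succ_zero (m : ℕ) : phi (m + 1) 0 = 0 := by simp [phi]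

lemma phi_nonneg (m : ℕ) {x : ℝ} (hx : 0 ≤ x) : 0 ≤ phi m x := by
  unfold phi; positivity

lemma continuous_phi (m : ℕ) : Continuous (phi m) := by
  unfold phi; fun_prop

lemma hasDerivAt_phi (m : ℕ) (x : ℝ) : HasDerivAt (phi (m + 1)) (2 * phi m x) x := by
  have h := (((hasDerivAt_id x).const_mul 2).pow (m + 1)).div_const ((m + 1).factorial : ℝ)
  refine h.congr_deriv ?_
  have : (m.factorial : ℝ) ≠ 0 := by positivity
  simp only [phi, id, Nat.factorial_succ, Nat.cast_mul, Nat.add_sub_cancel]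
  push_cast
  field_simp

lemma hasDerivAt_phi_sub (m : ℕ) (s t : ℝ) :
    HasDerivAt (fun t => phi (m + 1) (s - t)) (-2 * phi m (s - t)) t := by
  have h := (hasDerivAt_phi m (s - t)).comp t ((hasDerivAt_id t).const_sub s)
  refine h.congr_deriv ?_
  ring

lemma integral_phi_sub (m : ℕ) (x s : ℝ) :
    ∫ t in x..s, phi m (s - t) = phi (m + 1) (s - x) / 2 := by
  have h := intervalIntegral.integral_eq_sub_of_hasDerivAt
    (f := fun t => phi (m + 1) (s - t)) (f' := fun t => -2 * phi m (s - t)) (a := x) (b := s)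
    (fun t _ => hasDerivAt_phi_sub m s t)
    (((continuous_phi m).comp (continuous_const.sub continuous_id)).const_mul
      (-2 : ℝ) |>.intervalIntegrable _ _)
  rw [intervalIntegral.integral_const_mul] at h
  simp only [sub_self, phi_succ_zero] at h
  linarith

/-- The Wallis ratio `4^k / (2k choose k)`, written as `∏_{i<k} (2i+2)/(2i+1)`. -/
noncomputable def wallis (k : ℕ) : ℝ := ∏ i ∈ range k, (2 * (i : ℝ) + 2) / (2 * i + 1)

lemma wallis_succ (k : ℕ) : wallis (k + 1) = wallis k * ((2 * k + 2) / (2 * k + 1)) := by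
  unfold wallis; rw [prod_range_succ]

lemma wallis_pos (k : ℕ) : 0 < wallis k := by
  unfold wallis; exact prod_pos fun i _ => by positivity

/-- The moment `∫₀ˢ sin^{2k} t · phi m (s - t) dt`. -/
noncomputable def moment (k m : ℕ) (s : ℝ) : ℝ :=
  ∫ t in (0 : ℝ)..s, sin t ^ (2 * k) * phi m (s - t)

lemma intervalIntegrable_moment (k m : ℕ) (s : ℝ) :
    IntervalIntegrable (fun t => sin t ^ (2 * k) * phi m (s - t)) volume 0 s := by
  refine Continuous.intervalIntegrable ?_ _ _
  have := continuous_phi m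
  fun_prop

lemma moment_nonneg (k m : ℕ) {s : ℝ} (hs : 0 ≤ s) : 0 ≤ moment k m s := by
  refine intervalIntegral.integral_nonneg hs fun t ht => ?_
  exact mul_nonneg (by rw [pow_mul]; positivity) (phi_nonneg _ (by linarith [ht.2]))

lemma moment_zero (m : ℕ) (s : ℝ) : moment 0 m s = phi (m + 1) s / 2 := by
  have h := integral_phi_sub m 0 s
  simpa [moment] using h

lemma hasDerivAt_sin_pow (k : ℕ) (t : ℝ) :
    HasDerivAt (fun t => sin t ^ (k + 1)) ((k + 1) * sin t ^ k * cos t) t := by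
  exact ((hasDerivAt_sin t).pow (k + 1)).congr_deriv (by simp)

/-- Two integrations by parts, based on
`(d/dt)² sin^{2k+2} = (2k+2)(2k+1) sin^{2k} - (2k+2)² sin^{2k+2}`; the boundary terms containing `g s`
vanish, and those at `0` vanish because of the powers of `sin`. -/
lemma moment_rec_aux (k : ℕ) (s : ℝ) (g g₁ g₂ : ℝ → ℝ) (hg : ∀ t, HasDerivAt g (g₁ t) t)
    (hg₁ : ∀ t, HasDerivAt g₁ (g₂ t) t) (hc : Continuous g₂) (h0 : g s = 0) :
    (∫ t in (0 : ℝ)..s, sin t ^ (2 * k + 2) * g₂ t) - sin s ^ (2 * k + 2) * g₁ s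
      = (2 * k + 2) * (2 * k + 1) * (∫ t in (0 : ℝ)..s, sin t ^ (2 * k) * g t)
        - (2 * k + 2) ^ 2 * ∫ t in (0 : ℝ)..s, sin t ^ (2 * k + 2) * g t := by
  have cg : Continuous g := continuous_iff_continuousAt.2 fun t => (hg t).continuousAt
  have key := intervalIntegral.integral_eq_sub_of_hasDerivAt (a := 0) (b := s)
    (f := fun t => sin t ^ (2 * k + 2) * g₁ t - ((2 * k + 2) * sin t ^ (2 * k + 1) * cos t) * g t)
    (f' := fun t => sin t ^ (2 * k + 2) * g₂ t
      - ((2 * k + 2) * (2 * k + 1) * (sin t ^ (2 * k) * g t)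
        - (2 * k + 2) ^ 2 * (sin t ^ (2 * k + 2) * g t)))
    (fun t _ => by
      have h1 := (hasDerivAt_sin_pow (2 * k + 1) t).mul (hg₁ t)
      have h2 := (((hasDerivAt_sin_pow (2 * k) t).const_mul (2 * k + 2 : ℝ)).mul
        (hasDerivAt_cos t)).mul (hg t)
      refine (h1.sub h2).congr_deriv ?_
      simp only [Pi.mul_apply]
      push_cast
      have : cos t * cos t = 1 - sin t ^ 2 := by nlinarith [sin_sq_add_cos_sq t]
      linear_combination (-(2 * k + 2) * (2 * k + 1) * sin t ^ (2 * k) * g t) * this)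
    (by apply Continuous.intervalIntegrable; fun_prop)
  have i1 : IntervalIntegrable (fun t => sin t ^ (2 * k + 2) * g₂ t) volume 0 s := by
    apply Continuous.intervalIntegrable; fun_prop
  have i2 : IntervalIntegrable
      (fun t => (2 * k + 2 : ℝ) * (2 * k + 1) * (sin t ^ (2 * k) * g t)) volume 0 s := by
    apply Continuous.intervalIntegrable; fun_prop
  have i3 : IntervalIntegrable
      (fun t => (2 * k + 2 : ℝ) ^ 2 * (sin t ^ (2 * k + 2) * g t)) volume 0 s := by
    apply Continuous.intervalIntegrable; fun_prop
  rw [intervalIntegral.integral_sub i1 (i2.sub i3), intervalIntegral.integral_sub i2 i3,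
    intervalIntegral.integral_const_mul, intervalIntegral.integral_const_mul] at key
  simp only [h0, sin_zero] at key
  simp at key
  linarith

/-- Dividing the `(k + 1)`-st weighted moment by `(k + 1)²` turns it into a telescoping difference of
weighted moments of degree `m + 2`. -/
lemma moment_rec (k m : ℕ) (s : ℝ) :
    wallis (k + 1) / (k + 1) ^ 2 * moment (k + 1) m s
      = wallis k * moment k (m + 2) s - wallis (k + 1) * moment (k + 1) (m + 2) s := by
  have h := moment_rec_aux k s (fun t => phi (m + 2) (s - t)) (fun t => -2 * phi (m + 1) (s - t))
    (fun t => 4 * phi m (s - t)) (fun t => hasDerivAt_phi_sub (m + 1) s t)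
    (fun t => ((hasDerivAt_phi_sub m s t).const_mul (-2)).congr_deriv (by ring))
    (by have := continuous_phi m; fun_prop) (by simp [phi_succ_zero])
  simp only [sub_self, phi_succ_zero, mul_zero, sub_zero] at h
  simp only [mul_left_comm _ (4 : ℝ), intervalIntegral.integral_const_mul] at h
  unfold moment
  rw [wallis_succ, show 2 * (k + 1) = 2 * k + 2 by ring]
  field_simp
  linear_combination wallis k * h / 2

/-- The analogue of `moment_rec` with a point mass at `s` in place of `phi m (s - t) dt`. -/
lemma moment_rec_base (k : ℕ) (s : ℝ) :
    wallis (k + 1) / (k + 1) ^ 2 * sin s ^ (2 * (k + 1))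
      = wallis k * (2 * moment k 1 s) - wallis (k + 1) * (2 * moment (k + 1) 1 s) := by
  have h := moment_rec_aux k s (fun t => phi 1 (s - t)) (fun _ => -2)
    (fun t => 0) (fun t => by simpa [phi_zero] using hasDerivAt_phi_sub 0 s t)
    (fun t => hasDerivAt_const _ _) continuous_const (by simp [phi])
  simp only [mul_zero, intervalIntegral.integral_zero] at h
  unfold moment
  rw [wallis_succ, show 2 * (k + 1) = 2 * k + 2 by ring]
  field_simp
  linear_combination wallis k * h / 2

lemma wallis_mul_moment (k : ℕ) : wallis k * moment k 0 (π / 2) = π / 2 := by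
  simp only [moment, phi_zero, mul_one]
  induction k with
  | zero => simp [wallis]
  | succ k ih =>
    rw [wallis_succ, show 2 * (k + 1) = 2 * k + 2 by ring, integral_sin_pow]
    simp only [sin_zero, cos_pi_div_two]
    refine Eq.trans ?_ ih
    have : (2 * (k : ℝ) + 2) ≠ 0 := by positivity
    push_cast
    field_simp
    simp
    ring

lemma wallis_mul_sin_cos (k : ℕ) :
    wallis k * ∫ t in (0 : ℝ)..(π / 2), sin t ^ (2 * k) * cos t ^ 2 = π / 2 / (2 * k + 2) := by
  have h1 := wallis_mul_moment k
  have h2 := wallis_mul_moment (k + 1)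
  simp only [moment, phi_zero, mul_one] at h1 h2
  have : ∫ t in (0 : ℝ)..(π / 2), sin t ^ (2 * k) * cos t ^ 2
      = (∫ t in (0 : ℝ)..(π / 2), sin t ^ (2 * k))
        - ∫ t in (0 : ℝ)..(π / 2), sin t ^ (2 * (k + 1)) := by
    rw [← intervalIntegral.integral_sub]
    · congr 1; ext t; rw [cos_sq']; ring
    · apply Continuous.intervalIntegrable; fun_prop
    · apply Continuous.intervalIntegrable; fun_prop
  rw [this, mul_sub, h1]
  rw [wallis_succ] at h2
  field_simp at h2 ⊢
  linarith

/-- If the kernel vanishes at `π / 2` at least like `cos²`, the weighted moments tend to `0`, since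
the weighted integral of `sin^{2k} cos²` is of order `1 / k`. -/
lemma tendsto_moment {m : ℕ} {s C : ℝ} (h0 : 0 ≤ s) (hs : s ≤ π / 2)
    (hC : ∀ t ∈ Set.Icc 0 s, phi m (s - t) ≤ C * cos t ^ 2) :
    Tendsto (fun k => wallis k * moment k m s) atTop (𝓝 0) := by
  have hC0 : 0 ≤ C := by
    have := hC 0 ⟨le_rfl, h0⟩
    simp only [sub_zero, cos_zero] at this
    linarith [phi_nonneg m h0]
  have hlim : Tendsto (fun k : ℕ => C * (π / 2 / (2 * k + 2))) atTop (𝓝 0) := by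
    rw [← mul_zero C]
    refine Tendsto.const_mul _ (Tendsto.div_atTop tendsto_const_nhds ?_)
    exact tendsto_atTop_add_const_right _ _
      (tendsto_natCast_atTop_atTop.const_mul_atTop (by norm_num))
  refine squeeze_zero (fun k => mul_nonneg (wallis_pos k).le (moment_nonneg k m h0))
    (fun k => ?_) hlim
  rw [← wallis_mul_sin_cos, mul_left_comm, ← intervalIntegral.integral_const_mul]
  refine mul_le_mul_of_nonneg_left ?_ (wallis_pos k).le
  calc moment k m s ≤ ∫ t in (0 : ℝ)..s, C * (sin t ^ (2 * k) * cos t ^ 2) := by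
        refine intervalIntegral.integral_mono_on h0 (intervalIntegrable_moment k m s)
          (by apply Continuous.intervalIntegrable; fun_prop) fun t ht => ?_
        have : 0 ≤ sin t ^ (2 * k) := by rw [pow_mul]; positivity
        nlinarith [mul_le_mul_of_nonneg_left (hC t ht) this]
    _ ≤ _ := by
        refine intervalIntegral.integral_mono_interval le_rfl h0 hs ?_
          (by apply Continuous.intervalIntegrable; fun_prop)
        refine Eventually.of_forall fun t => ?_
        have : 0 ≤ sin t ^ (2 * k) := by rw [pow_mul]; positivity
        simp only [Pi.zero_apply]
        positivity

lemma sub_le_cos {t : ℝ} (h0 : 0 ≤ t) (ht : t ≤ π / 2) : π / 2 - t ≤ π / 2 * cos t := by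
  have h := mul_le_sin (x := π / 2 - t) (by linarith) (by linarith)
  rw [sin_pi_div_two_sub] at h
  have hp := pi_pos
  field_simp at h ⊢
  linarith

lemma tendsto_moment_two (m : ℕ) {s : ℝ} (h0 : 0 ≤ s) (hs : s ≤ π / 2) :
    Tendsto (fun k => wallis k * moment k (m + 2) s) atTop (𝓝 0) := by
  refine tendsto_moment (C := (2 * s) ^ m / (m + 2).factorial * π ^ 2) h0 hs fun t ht => ?_
  have h1 := sub_le_cos ht.1 (ht.2.trans hs)
  have h2 : 2 * (s - t) ≤ π * cos t := by linarith
  have h3 : 0 ≤ 2 * (s - t) := by linarith [ht.2]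
  have h4 : 2 * (s - t) ≤ 2 * s := by linarith [ht.1]
  calc phi (m + 2) (s - t) = (2 * (s - t)) ^ m * (2 * (s - t)) ^ 2 / (m + 2).factorial := by
        rw [phi, pow_add]
    _ ≤ (2 * s) ^ m * (π * cos t) ^ 2 / (m + 2).factorial := by gcongr
    _ = _ := by ring

/-- Here `phi 1` vanishes only to first order, so `s < π / 2` is used to bound `cos` away from `0`. -/
lemma tendsto_moment_one {s : ℝ} (h0 : 0 ≤ s) (hs : s < π / 2) :
    Tendsto (fun k => wallis k * moment k 1 s) atTop (𝓝 0) := by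
  have hc : 0 < cos s := cos_pos_of_mem_Ioo ⟨by linarith, hs⟩
  refine tendsto_moment (C := π / cos s) h0 hs.le fun t ht => ?_
  have h1 := sub_le_cos ht.1 (ht.2.trans hs.le)
  have h2 : cos s ≤ cos t := cos_le_cos_of_nonneg_of_le_pi ht.1 (by linarith) ht.2
  have h3 : phi 1 (s - t) ≤ π * cos t := by simp [phi]; linarith
  refine h3.trans ?_
  rw [div_mul_eq_mul_div, le_div_iff₀ hc]
  have : 0 < cos t := hc.trans_le h2
  nlinarith [mul_le_mul_of_nonneg_left h2 (mul_pos pi_pos this).le]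

lemma tsum_telescope {u : ℕ → ℝ} (hu : ∀ k, 0 ≤ u k - u (k + 1))
    (hlim : Tendsto u atTop (𝓝 0)) (N : ℕ) :
    ∑' i, ENNReal.ofReal (u (N + i) - u (N + i + 1)) = ENNReal.ofReal (u N) := by
  have h : HasSum (fun i => u (N + i) - u (N + i + 1)) (u N) := by
    rw [hasSum_iff_tendsto_nat_of_nonneg (fun i => hu _)]
    have : ∀ n, ∑ i ∈ range n, (u (N + i) - u (N + i + 1)) = u N - u (N + n) := fun n => by
      simpa [add_assoc] using Finset.sum_range_sub' (fun i => u (N + i)) n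
    simp only [this]
    simpa using (tendsto_const_nhds (x := u N)).sub (hlim.comp (tendsto_add_atTop_nat N |>.congr
      fun n => add_comm n N))
  rw [← ENNReal.ofReal_tsum_of_nonneg (fun i => hu _) h.summable, h.tsum_eq]

lemma tsum_moment (m : ℕ) {s : ℝ} (h0 : 0 ≤ s) (hs : s ≤ π / 2) (N : ℕ) :
    ∑' i : ℕ, ENNReal.ofReal (wallis (N + i + 1) / ((N + i : ℕ) + 1 : ℝ) ^ 2
      * moment (N + i + 1) m s) = ENNReal.ofReal (wallis N * moment N (m + 2) s) := by
  simp only [moment_rec]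
  refine tsum_telescope (u := fun k => wallis k * moment k (m + 2) s) (fun k => ?_)
    (tendsto_moment_two m h0 hs) N
  rw [← moment_rec]
  have := wallis_pos (k + 1)
  have := moment_nonneg (k + 1) m h0
  positivity

lemma tsum_sin_pow {s : ℝ} (h0 : 0 ≤ s) (hs : s < π / 2) (N : ℕ) :
    ∑' i : ℕ, ENNReal.ofReal (wallis (N + i + 1) / ((N + i : ℕ) + 1 : ℝ) ^ 2
      * sin s ^ (2 * (N + i + 1))) = ENNReal.ofReal (wallis N * (2 * moment N 1 s)) := by
  simp only [moment_rec_base]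
  refine tsum_telescope (u := fun k => wallis k * (2 * moment k 1 s)) (fun k => ?_)
    ?_ N
  · rw [← moment_rec_base]
    have := wallis_pos (k + 1)
    have : 0 ≤ sin s ^ (2 * (k + 1)) := by rw [pow_mul]; positivity
    positivity
  · simpa [mul_left_comm] using (tendsto_moment_one h0 hs).const_mul 2

/-! ### Multiple zeta values as iterated sums -/

/-- `tailSum (s₁,…,s_r) N = ∑_{N < k₁ < ⋯ < k_r} ∏ 1/k_i^{s_i}`, as an iterated sum in `[0, ∞]`; the
outermost index is `k₁ = N + i + 1`. -/
noncomputable def tailSum : List ℕ → ℕ → ENNReal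
  | [], _ => 1
  | s :: l, N => ∑' i : ℕ, ENNReal.ofReal (1 / ((N + i : ℕ) + 1 : ℝ) ^ s) * tailSum l (N + i + 1)

lemma tsum_ge_eq (F : ℕ → ENNReal) (N : ℕ) :
    ∑' k, (if N ≤ k then F k else 0) = ∑' i, F (N + i) := by
  rw [← (add_right_injective N).tsum_eq (f := fun k => if N ≤ k then F k else 0)]
  · simp
  · intro k hk
    have : N ≤ k := by by_contra h; simp [h] at hk
    exact ⟨k - N, by simp; omega⟩

open Classical in
/-- Splitting off the smallest index of a strictly increasing tuple identifies the sum over tuples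
with the iterated sum. As in `mzv`, the entry `f i` stands for `k_i - 1`. -/
lemma tsum_eq_tailSum (l : List ℕ) (N : ℕ) :
    ∑' f : Fin l.length → ℕ, (if StrictMono f ∧ ∀ i, N ≤ f i then
      ∏ i, ENNReal.ofReal ((1 : ℝ) / ((f i + 1 : ℕ) : ℝ) ^ (l.get i)) else 0) = tailSum l N := by
  induction l generalizing N with
  | nil =>
    rw [tsum_eq_single (fun i => i.elim0) (fun f hf => (hf (funext fun i => i.elim0)).elim)]
    rw [if_pos ⟨fun i => i.elim0, fun i => i.elim0⟩]
    simp [tailSum]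
  | cons s l ih =>
    refine ((Fin.consEquiv (fun _ : Fin (l.length + 1) => ℕ)).tsum_eq _).symm.trans ?_
    rw [ENNReal.tsum_prod', tailSum,
      ← tsum_ge_eq (fun k => ENNReal.ofReal (1 / (k + 1 : ℝ) ^ s) * tailSum l (k + 1)) N]
    refine tsum_congr fun k => ?_
    split_ifs with hk
    · rw [← ih, ← ENNReal.tsum_mul_left]
      refine tsum_congr fun g => ?_
      have hiff : (StrictMono (Fin.cons k g : Fin (l.length + 1) → ℕ) ∧
          ∀ i, N ≤ (Fin.cons k g : Fin (l.length + 1) → ℕ) i) ↔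
          (StrictMono g ∧ ∀ i, k + 1 ≤ g i) := by
        rw [Fin.strictMono_cons, Fin.forall_fin_succ]
        simp only [Fin.cons_zero, Fin.cons_succ]
        exact ⟨fun h => ⟨h.1.2, h.1.1⟩, fun h => ⟨⟨h.2, h.1⟩, hk, fun i =>
          hk.trans ((Nat.le_succ k).trans (h.2 i))⟩⟩
      rw [mul_ite, mul_zero]
      refine if_congr hiff ((Fin.prod_univ_succ _).trans ?_) rfl
      simp
    · refine ENNReal.tsum_eq_zero.2 fun g => if_neg fun h => hk ?_
      simpa using h.2 0

lemma mzv_eq_toReal (l : List ℕ) : mzv l = (tailSum l 0).toReal := by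
  classical
  rw [← tsum_eq_tailSum]
  simp only [zero_le, implies_true, and_true]
  have : ∀ f : Fin l.length → ℕ, (if StrictMono f then
      ∏ i, ENNReal.ofReal ((1 : ℝ) / ((f i + 1 : ℕ) : ℝ) ^ (l.get i)) else 0)
      = {f : Fin l.length → ℕ | StrictMono f}.indicator (fun f =>
        ENNReal.ofReal (∏ i, (1 : ℝ) / ((f i + 1 : ℕ) : ℝ) ^ (l.get i))) f := fun f => by
    rw [Set.indicator_apply, ENNReal.ofReal_prod_of_nonneg (fun i _ => by positivity)]
    rfl
  simp only [this]
  rw [← _root_.tsum_subtype, ENNReal.tsum_toReal_eq (fun _ => ENNReal.ofReal_ne_top)]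
  refine tsum_congr fun f => ?_
  rw [ENNReal.toReal_ofReal (prod_nonneg fun i _ => by positivity)]

/-! ### The integral representation of `H(a, b)` -/

/-- The kernel `cot s · phi (2b+1) (π/2 - s)` attached to the block `3, {2}^b`. -/
noncomputable def cotPhi (b : ℕ) (s : ℝ) : ℝ := cos s / sin s * phi (2 * b + 1) (π / 2 - s)

lemma measurable_cotPhi (b : ℕ) : Measurable (cotPhi b) := by
  have := (continuous_phi (2 * b + 1)).measurable
  unfold cotPhi; fun_prop

lemma cotPhi_nonneg (b : ℕ) {s : ℝ} (hs : s ∈ Set.Ioo 0 (π / 2)) : 0 ≤ cotPhi b s := by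
  have h1 := sin_pos_of_pos_of_lt_pi hs.1 (by linarith [hs.2, pi_pos])
  have h2 := cos_pos_of_mem_Ioo ⟨by linarith [hs.1, pi_pos], hs.2⟩
  have h3 := phi_nonneg (2 * b + 1) (x := π / 2 - s) (by linarith [hs.2])
  unfold cotPhi; positivity

lemma measurable_moment (k m : ℕ) : Measurable (moment k m) := by
  refine Continuous.measurable ?_
  refine intervalIntegral.continuous_parametric_intervalIntegral_of_continuous
    (f := fun s t => sin t ^ (2 * k) * phi m (s - t)) ?_ continuous_id
  have := continuous_phi m
  simp only [Function.uncurry_def]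
  fun_prop

lemma tailSum_twos (b N : ℕ) : tailSum (List.replicate b 2) N
    = ENNReal.ofReal (2 / π * (wallis N * moment N (2 * b) (π / 2))) := by
  induction b generalizing N with
  | zero =>
    rw [mul_zero, wallis_mul_moment]
    have : 2 / π * (π / 2) = 1 := by have := pi_pos; field_simp
    simp [tailSum, this]
  | succ b ih =>
    rw [List.replicate_succ, tailSum, ENNReal.ofReal_mul (by positivity),
      show 2 * (b + 1) = 2 * b + 2 by ring, ← tsum_moment (2 * b) (by positivity) le_rfl,
      ← ENNReal.tsum_mul_left]
    refine tsum_congr fun i => ?_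
    rw [ih, ← ENNReal.ofReal_mul (by positivity), ← ENNReal.ofReal_mul (by positivity)]
    congr 1
    ring

/-- Integration by parts absorbs one factor `1 / (k + 1)`. -/
lemma moment_div (k b : ℕ) :
    1 / (k + 1 : ℝ) * moment (k + 1) (2 * b) (π / 2)
      = ∫ t in (0 : ℝ)..(π / 2), sin t ^ (2 * k + 1) * cos t * phi (2 * b + 1) (π / 2 - t) := by
  have c1 := continuous_phi (2 * b)
  have c2 := continuous_phi (2 * b + 1)
  have key := intervalIntegral.integral_eq_sub_of_hasDerivAt (a := 0) (b := π / 2)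
    (f := fun t => sin t ^ (2 * k + 2) * phi (2 * b + 1) (π / 2 - t))
    (f' := fun t => (2 * k + 2) * (sin t ^ (2 * k + 1) * cos t * phi (2 * b + 1) (π / 2 - t))
      - 2 * (sin t ^ (2 * (k + 1)) * phi (2 * b) (π / 2 - t)))
    (fun t _ => by
      refine ((hasDerivAt_sin_pow (2 * k + 1) t).mul
        (hasDerivAt_phi_sub (2 * b) (π / 2) t)).congr_deriv ?_
      push_cast
      ring)
    (by apply Continuous.intervalIntegrable; fun_prop)
  rw [intervalIntegral.integral_sub (by apply Continuous.intervalIntegrable; fun_prop)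
    (by apply Continuous.intervalIntegrable; fun_prop), intervalIntegral.integral_const_mul,
    intervalIntegral.integral_const_mul] at key
  simp only [sub_self, phi_succ_zero, sin_zero] at key
  unfold moment
  rw [div_mul_eq_mul_div, one_mul, div_eq_iff (by positivity)]
  simp at key
  linarith

lemma moment_div_lintegral (k b : ℕ) :
    ENNReal.ofReal (1 / (k + 1 : ℝ) * moment (k + 1) (2 * b) (π / 2))
      = ∫⁻ s in Set.Ioo 0 (π / 2), ENNReal.ofReal (sin s ^ (2 * (k + 1)) * cotPhi b s) := by
  have c2 := continuous_phi (2 * b + 1)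
  have hp := pi_pos
  have hpt : ∀ s ∈ Set.Ioo 0 (π / 2), sin s ^ (2 * k + 1) * cos s * phi (2 * b + 1) (π / 2 - s)
      = sin s ^ (2 * (k + 1)) * cotPhi b s := fun s hs => by
    have h1 := sin_pos_of_pos_of_lt_pi hs.1 (by linarith [hs.2, pi_pos])
    unfold cotPhi
    field_simp
    ring
  have hint : IntervalIntegrable (fun t : ℝ =>
      sin t ^ (2 * k + 1) * cos t * phi (2 * b + 1) (π / 2 - t)) volume 0 (π / 2) := by
    apply Continuous.intervalIntegrable; fun_prop
  rw [moment_div, intervalIntegral.integral_of_le (by positivity), integral_Ioc_eq_integral_Ioo,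
    ofReal_integral_eq_lintegral_ofReal]
  · exact setLIntegral_congr_fun measurableSet_Ioo fun s hs => by simp only [hpt s hs]
  · exact ((intervalIntegrable_iff_integrableOn_Ioo_of_le (by positivity)).1 hint)
  · refine (ae_restrict_iff' measurableSet_Ioo).2 (Eventually.of_forall fun s hs => ?_)
    simp only [hpt s hs]
    have := cotPhi_nonneg b hs
    have : 0 ≤ sin s ^ (2 * (k + 1)) := by rw [pow_mul]; positivity
    simp only [Pi.zero_apply]
    positivity

/-- The innermost sum over the position of `3` is evaluated under the integral by `tsum_sin_pow`, and
each further `2` on the left raises the degree of the inner moment by two. -/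
lemma tailSum_three (a b N : ℕ) :
    tailSum (List.replicate a 2 ++ 3 :: List.replicate b 2) N
      = ∫⁻ s in Set.Ioo 0 (π / 2), ENNReal.ofReal (2 / π * cotPhi b s)
          * ENNReal.ofReal (wallis N * (2 * moment N (2 * a + 1) s)) := by
  have mc := measurable_cotPhi b
  induction a generalizing N with
  | zero =>
    -- The point `s = π / 2` is excluded, since `tsum_sin_pow` requires `s < π / 2`.
    have : ∀ s ∈ Set.Ioo 0 (π / 2), ENNReal.ofReal (2 / π * cotPhi b s)
          * ENNReal.ofReal (wallis N * (2 * moment N (2 * 0 + 1) s))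
        = ∑' i : ℕ, ENNReal.ofReal (2 / π * cotPhi b s) * ENNReal.ofReal
          (wallis (N + i + 1) / ((N + i : ℕ) + 1 : ℝ) ^ 2 * sin s ^ (2 * (N + i + 1))) :=
      fun s hs => by
        rw [ENNReal.tsum_mul_left, tsum_sin_pow hs.1.le hs.2]
    rw [setLIntegral_congr_fun measurableSet_Ioo this, lintegral_tsum (fun i => by fun_prop)]
    rw [List.replicate_zero, List.nil_append, tailSum]
    refine tsum_congr fun i => ?_
    rw [tailSum_twos, ← ENNReal.ofReal_mul (by positivity)]
    have hw := wallis_pos (N + i + 1)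
    have e1 : 1 / ((N + i : ℕ) + 1 : ℝ) ^ 3 *
        (2 / π * (wallis (N + i + 1) * moment (N + i + 1) (2 * b) (π / 2)))
        = (2 / π * wallis (N + i + 1) / ((N + i : ℕ) + 1 : ℝ) ^ 2) *
          (1 / ((N + i : ℕ) + 1 : ℝ) * moment (N + i + 1) (2 * b) (π / 2)) := by
      field_simp
    rw [e1, ENNReal.ofReal_mul (by positivity), moment_div_lintegral,
      ← lintegral_const_mul _ (by fun_prop)]
    refine setLIntegral_congr_fun measurableSet_Ioo fun s hs => ?_
    have := cotPhi_nonneg b hs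
    rw [← ENNReal.ofReal_mul (by positivity), ← ENNReal.ofReal_mul (by positivity)]
    congr 1
    ring
  | succ a ih =>
    have mm := fun k => measurable_moment k (2 * a + 1)
    have : ∀ s ∈ Set.Ioo 0 (π / 2), ENNReal.ofReal (2 / π * cotPhi b s)
          * ENNReal.ofReal (wallis N * (2 * moment N (2 * (a + 1) + 1) s))
        = ∑' i : ℕ, ENNReal.ofReal (2 / π * cotPhi b s) * (ENNReal.ofReal 2 * ENNReal.ofReal
          (wallis (N + i + 1) / ((N + i : ℕ) + 1 : ℝ) ^ 2 * moment (N + i + 1) (2 * a + 1) s)) :=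
      fun s hs => by
        rw [ENNReal.tsum_mul_left, ENNReal.tsum_mul_left, tsum_moment _ hs.1.le hs.2.le,
          ← ENNReal.ofReal_mul (by positivity : (0 : ℝ) ≤ 2),
          show 2 * (a + 1) + 1 = 2 * a + 1 + 2 by ring, mul_left_comm]
    rw [setLIntegral_congr_fun measurableSet_Ioo this, lintegral_tsum (fun i => by fun_prop)]
    rw [List.replicate_succ, List.cons_append, tailSum]
    refine tsum_congr fun i => ?_
    rw [ih, ← lintegral_const_mul _ (by fun_prop)]
    refine setLIntegral_congr_fun measurableSet_Ioo fun s hs => ?_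
    rw [mul_left_comm, ← ENNReal.ofReal_mul (by positivity),
      ← ENNReal.ofReal_mul (by positivity : (0 : ℝ) ≤ 2)]
    congr 2
    ring

lemma mzv_eq_integral (a b : ℕ) : mzv (List.replicate a 2 ++ 3 :: List.replicate b 2)
    = ∫ s in (0 : ℝ)..(π / 2), 2 / π * cotPhi b s * phi (2 * a + 2) s := by
  have hp := pi_pos
  have mc := measurable_cotPhi b
  have mp := (continuous_phi (2 * a + 2)).measurable
  rw [mzv_eq_toReal, tailSum_three, intervalIntegral.integral_of_le (by positivity),
    integral_Ioc_eq_integral_Ioo, integral_eq_lintegral_of_nonneg_ae]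
  · congr 1
    refine setLIntegral_congr_fun measurableSet_Ioo fun s hs => ?_
    have := cotPhi_nonneg b hs
    rw [← ENNReal.ofReal_mul (by positivity), moment_zero]
    congr 1
    simp only [wallis, range_zero, prod_empty]
    ring
  · refine (ae_restrict_iff' measurableSet_Ioo).2 (Eventually.of_forall fun s hs => ?_)
    have := cotPhi_nonneg b hs
    have := phi_nonneg (2 * a + 2) hs.1.le
    simp only [Pi.zero_apply]
    positivity
  · exact Measurable.aestronglyMeasurable (by fun_prop)

/-! ### Expansion of the cotangent -/

/-- The expansion `∑ ζ(2n) z^{2n} = -(πz/2) cot(πz)`, obtained from the Mittag-Leffler expansion of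
the cotangent by expanding each term into a geometric series. -/
lemma hasSum_zeta_cot {z : ℝ} (h0 : 0 < z) (h1 : z < 1) :
    HasSum (fun n : ℕ => riemannZeta (2 * n) * (z : ℂ) ^ (2 * n))
      (-(π * z / 2) * (Complex.cos (π * z) / Complex.sin (π * z))) := by
  -- The double series `∑ (z / (n+1))^{2m+2}`: its rows give the cotangent, its columns the zeta
  -- values.
  let F : ℕ → ℕ → ℂ := fun n m => (z : ℂ) ^ (2 * m + 2) / ((n : ℂ) + 1) ^ (2 * m + 2)
  have hzc : (z : ℂ) ∈ Complex.integerComplement := by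
    rintro ⟨k, hk⟩
    have hk' : (k : ℝ) = z := by exact_mod_cast hk
    rw [← hk'] at h0 h1
    have h0' : 0 < k := by exact_mod_cast h0
    have h1' : k < 1 := by exact_mod_cast h1
    omega
  have hz0 : (z : ℂ) ≠ 0 := by exact_mod_cast h0.ne'
  have hz2 : z ^ 2 < 1 := by nlinarith
  have hF : Summable (Function.uncurry F) := by
    have s1 : Summable fun n : ℕ => 1 / ((n : ℝ) + 1) ^ 2 := by
      have := (summable_nat_add_iff 1).2 (Real.summable_one_div_nat_pow.2 one_lt_two)
      simpa using this
    have s2 : Summable fun m : ℕ => (z ^ 2) ^ m := summable_geometric_of_lt_one (by positivity) hz2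
    have s3 := s1.mul_of_nonneg s2 (fun n => by positivity) (fun n => by positivity)
    refine Summable.of_norm_bounded s3 fun p => ?_
    obtain ⟨n, m⟩ := p
    have hn : ‖(n : ℂ) + 1‖ = (n : ℝ) + 1 := by
      exact_mod_cast Complex.norm_natCast (n + 1)
    simp only [Function.uncurry, F, norm_div, norm_pow, hn, Complex.norm_real, Real.norm_eq_abs,
      abs_of_pos h0]
    rw [div_le_iff₀ (by positivity), one_div, mul_comm (_)⁻¹, mul_assoc, ← pow_mul]
    have e1 : z ^ (2 * m + 2) ≤ z ^ (2 * m) * 1 := by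
      rw [pow_add]; gcongr
    refine e1.trans (mul_le_mul_of_nonneg_left ?_ (by positivity))
    rw [inv_mul_eq_div, one_le_div (by positivity)]
    exact pow_le_pow_right₀ (by linarith [(n.cast_nonneg : (0 : ℝ) ≤ n)]) (by omega)
  have hrow : ∀ n, ∑' m, F n m = (z : ℂ) ^ 2 / (((n : ℂ) + 1) ^ 2 - z ^ 2) := fun n => by
    have hN : ((n : ℂ) + 1) ≠ 0 := by exact_mod_cast n.succ_ne_zero
    have hN2 : ((n : ℂ) + 1) ^ 2 - z ^ 2 ≠ 0 := by
      have : (0 : ℝ) < ((n : ℝ) + 1) ^ 2 - z ^ 2 := by nlinarith [(n.cast_nonneg : (0 : ℝ) ≤ n)]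
      exact_mod_cast this.ne'
    have hr : ‖(z : ℂ) ^ 2 / ((n : ℂ) + 1) ^ 2‖ < 1 := by
      have : (z : ℂ) ^ 2 / ((n : ℂ) + 1) ^ 2 = ((z ^ 2 / ((n : ℝ) + 1) ^ 2 : ℝ) : ℂ) := by
        push_cast; rfl
      rw [this, Complex.norm_real, Real.norm_eq_abs, abs_of_nonneg (by positivity),
        div_lt_one (by positivity)]
      nlinarith [(n.cast_nonneg : (0 : ℝ) ≤ n)]
    have : ∀ m, F n m
        = (z : ℂ) ^ 2 / ((n : ℂ) + 1) ^ 2 * ((z : ℂ) ^ 2 / ((n : ℂ) + 1) ^ 2) ^ m := fun m => by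
      simp only [F, div_pow, ← pow_mul]
      rw [pow_add, pow_add]
      field_simp
    simp only [this]
    rw [tsum_mul_left, tsum_geometric_of_norm_lt_one hr]
    have : 1 - (z : ℂ) ^ 2 / ((n : ℂ) + 1) ^ 2 ≠ 0 := by
      rw [one_sub_div (pow_ne_zero 2 hN)]
      exact div_ne_zero hN2 (pow_ne_zero 2 hN)
    field_simp
  have hcol : ∀ m, ∑' n, F n m = riemannZeta (2 * (m + 1 : ℕ)) * (z : ℂ) ^ (2 * (m + 1)) :=
      fun m => by
    have hz := zeta_eq_tsum_one_div_nat_add_one_cpow (s := ((2 * (m + 1) : ℕ) : ℂ)) (by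
      rw [Complex.natCast_re]; exact_mod_cast (by omega : 1 < 2 * (m + 1)))
    simp only [Complex.cpow_natCast] at hz
    rw [Nat.cast_mul] at hz
    norm_num only [Nat.cast_ofNat] at hz
    rw [hz, ← tsum_mul_right]
    refine tsum_congr fun n => ?_
    simp only [F]
    ring
  have hcot : ∑' n : ℕ, (z : ℂ) ^ 2 / (((n : ℂ) + 1) ^ 2 - z ^ 2)
      = (1 - π * z * (Complex.cos (π * z) / Complex.sin (π * z))) / 2 := by
    have h := cot_series_rep' hzc
    rw [Complex.cot_eq_cos_div_sin] at h
    have hterm : ∀ n : ℕ, (z : ℂ) ^ 2 / (((n : ℂ) + 1) ^ 2 - z ^ 2)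
        = (-(z : ℂ) / 2) * (1 / (z - ((n : ℂ) + 1)) + 1 / (z + ((n : ℂ) + 1))) := fun n => by
      have a1 : (z : ℂ) - ((n : ℂ) + 1) ≠ 0 := by
        have : z - ((n : ℝ) + 1) < 0 := by linarith [(n.cast_nonneg : (0 : ℝ) ≤ n)]
        exact_mod_cast this.ne
      have a2 : (z : ℂ) + ((n : ℂ) + 1) ≠ 0 := by
        have : 0 < z + ((n : ℝ) + 1) := by positivity
        exact_mod_cast this.ne'
      have a3 : ((n : ℂ) + 1) ^ 2 - z ^ 2
        = -((z - ((n : ℂ) + 1)) * (z + ((n : ℂ) + 1))) := by ring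
      rw [a3]
      field_simp
      ring
    simp only [hterm]
    rw [tsum_mul_left, ← h]
    field_simp
    ring
  have hs : HasSum (fun m => ∑' n, F n m)
      ((1 - π * z * (Complex.cos (π * z) / Complex.sin (π * z))) / 2) := by
    have := hF.prod_symm.prod.hasSum
    have e := hF.tsum_comm
    simp only [Function.uncurry, Prod.swap] at this e
    rw [e] at this
    simpa only [hrow, hcot] using this
  rw [funext hcol] at hs
  have := (hasSum_nat_add_iff (f := fun n : ℕ => riemannZeta (2 * n) * (z : ℂ) ^ (2 * n)) 1).1 hs
  rw [sum_range_one, Nat.cast_zero, mul_zero, mul_zero, riemannZeta_zero] at this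
  convert! this using 1
  ring

lemma integral_beta (a b n : ℕ) :
    ∫ x in (0 : ℝ)..1, (x : ℂ) ^ (2 * n + 2 * a + 1) * (1 - (x : ℂ)) ^ (2 * b + 1)
      = ((2 * b + 1).factorial : ℂ)
        / ∏ j ∈ range (2 * b + 2), ((2 * n + 2 * a + 2 + j : ℕ) : ℂ) := by
  have h := Complex.betaIntegral_eval_nat_add_one_right (u := ((2 * n + 2 * a + 2 : ℕ) : ℂ))
    (by rw [Complex.natCast_re]; positivity) (2 * b + 1)
  simp only [← Nat.cast_add] at h
  rw [← h, Complex.betaIntegral]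
  refine intervalIntegral.integral_congr fun x _ => ?_
  have e1 : ((2 * n + 2 * a + 2 : ℕ) : ℂ) - 1 = ((2 * n + 2 * a + 1 : ℕ) : ℂ) := by
    push_cast; ring
  have e2 : ((2 * b + 1 : ℕ) : ℂ) + 1 - 1 = ((2 * b + 1 : ℕ) : ℂ) := by
    push_cast; ring
  simp only [e1, e2, Complex.cpow_natCast]

lemma hasSum_integral (a b : ℕ) :
    HasSum (fun n : ℕ => riemannZeta (2 * n) * (1 / 2) ^ (2 * n) * (((2 * b + 1).factorial : ℂ)
        / ∏ j ∈ range (2 * b + 2), ((2 * n + 2 * a + 2 + j : ℕ) : ℂ)))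
      (∫ x in (0 : ℝ)..1, -(π / 4 : ℂ) *
        (Complex.cos (π * (x / 2)) / Complex.sin (π * (x / 2)))
          * (x : ℂ) ^ (2 * a + 2) * (1 - (x : ℂ)) ^ (2 * b + 1)) := by
  simp only [← integral_beta, ← intervalIntegral.integral_const_mul]
  -- The dominating series is the value at the endpoint `x = 1`, inside the disc of convergence
  -- since `x / 2 < 1`.
  have hsum : Summable fun n : ℕ => riemannZeta (2 * n) * (1 / 2 : ℂ) ^ (2 * n) := by
    simpa using (hasSum_zeta_cot (z := 1 / 2) (by norm_num) (by norm_num)).summable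
  refine intervalIntegral.hasSum_integral_of_dominated_convergence
    (fun n _ => ‖riemannZeta (2 * n) * (1 / 2 : ℂ) ^ (2 * n)‖) (fun n => ?_) (fun n => ?_) ?_ ?_ ?_
  · exact Continuous.aestronglyMeasurable (by fun_prop)
  · refine Eventually.of_forall fun x hx => ?_
    rw [Set.uIoc_of_le zero_le_one] at hx
    rw [norm_mul]
    refine mul_le_of_le_one_right (norm_nonneg _) ?_
    have e : (1 : ℂ) - x = ((1 - x : ℝ) : ℂ) := by push_cast; rfl
    rw [e, norm_mul, norm_pow, norm_pow, Complex.norm_real, Complex.norm_real, Real.norm_eq_abs,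
      Real.norm_eq_abs, abs_of_pos hx.1, abs_of_nonneg (by linarith [hx.2])]
    exact mul_le_one₀ (pow_le_one₀ hx.1.le hx.2) (pow_nonneg (by linarith [hx.2]) _)
      (pow_le_one₀ (by linarith [hx.2]) (by linarith [hx.1]))
  · exact Eventually.of_forall fun x hx => hsum.norm
  · exact intervalIntegrable_const
  · refine Eventually.of_forall fun x hx => ?_
    rw [Set.uIoc_of_le zero_le_one] at hx
    have h := (hasSum_zeta_cot (z := x / 2) (by linarith [hx.1]) (by linarith [hx.2])).mul_right
      ((x : ℂ) ^ (2 * a + 1) * (1 - (x : ℂ)) ^ (2 * b + 1))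
    convert! h using 1
    · ext n
      push_cast
      rw [div_eq_mul_inv (x : ℂ) 2, one_div, mul_pow]
      ring
    · push_cast
      ring

/-- The substitution `s = πx/2` in `mzv_eq_integral`. -/
lemma mzv_eq_complex_integral (a b : ℕ) :
    ((mzv (List.replicate a 2 ++ 3 :: List.replicate b 2) : ℝ) : ℂ)
      = -4 * (π : ℂ) ^ (2 * a + 2 * b + 2) / ((2 * a + 2).factorial * (2 * b + 1).factorial) *
      ∫ x in (0 : ℝ)..1, -(π / 4 : ℂ) *
        (Complex.cos (π * (x / 2)) / Complex.sin (π * (x / 2)))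
          * (x : ℂ) ^ (2 * a + 2) * (1 - (x : ℂ)) ^ (2 * b + 1) := by
  have hsub := intervalIntegral.mul_integral_comp_mul_left (a := 0) (b := 1) (c := π / 2)
    (f := fun s => 2 / π * cotPhi b s * phi (2 * a + 2) s)
  rw [mul_zero, mul_one] at hsub
  rw [mzv_eq_integral, ← hsub, ← intervalIntegral.integral_const_mul,
    ← intervalIntegral.integral_const_mul, ← intervalIntegral.integral_ofReal]
  refine intervalIntegral.integral_congr fun x _ => ?_
  have hp : (π : ℂ) ≠ 0 := by exact_mod_cast pi_ne_zero
  have f1 : ((2 * a + 2).factorial : ℂ) ≠ 0 := by exact_mod_cast Nat.factorial_ne_zero _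
  have f2 : ((2 * b + 1).factorial : ℂ) ≠ 0 := by exact_mod_cast Nat.factorial_ne_zero _
  simp only [cotPhi, phi]
  push_cast
  rw [show (π : ℂ) * (x / 2) = π / 2 * x by ring,
    show 2 * ((π : ℂ) / 2 - π / 2 * x) = π * (1 - x) by ring,
    show 2 * ((π : ℂ) / 2 * x) = π * x by ring, mul_pow, mul_pow]
  field_simp
  ring

end Lupu

/-- Lupu's first conjecture (Theorem 1.4): for all nonnegative integers `a`, `b`,
`H(a,b) = -4π^{2a+2b+2}/(2a+2)! · ∑_{n≥0} ζ(2n)/((2n+2a+2)⋯(2n+2a+2b+3)·2^{2n})`. -/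
theorem lupu_conjecture_H (a b : ℕ) :
    (H a b : ℂ) = (-4 * (π : ℂ) ^ (2 * a + 2 * b + 2) / (Nat.factorial (2 * a + 2) : ℂ)) *
      ∑' n : ℕ, riemannZeta (2 * n) /
        ((∏ j ∈ Finset.range (2 * b + 2), ((2 * n + 2 * a + 2 + j : ℕ) : ℂ)) * 2 ^ (2 * n)) := by
  have f2 : ((2 * b + 1).factorial : ℂ) ≠ 0 := by exact_mod_cast Nat.factorial_ne_zero _
  rw [H, Lupu.mzv_eq_complex_integral, ← (Lupu.hasSum_integral a b).tsum_eq, ← tsum_mul_left,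
    ← tsum_mul_left]
  refine tsum_congr fun n => ?_
  rw [one_div, inv_pow]
  field_simp
end

section
/- For all nonnegative integers a and b, the multiple t-value T(a,b) = t({2}^a, 3, {2}^b) satisfies T(a,b) = (-2/(2a+1)!) · (π/2)^{2a+2b+2} · Σ_{n=0}^{∞} ζ(2n) / ((2n+2a+1)(2n+2a+2)···(2n+2a+2b+2)·2^{2n}), where ζ denotes the Riemann zeta function (with ζ(0) = -1/2 given by analytic continuation). -/
/-! Both sides are equal to
`I = ∫_0^{π/2} x^(2a+1)/(2a+1)! · (π/2 - x)^(2b+1)/(2b+1)! · cot x dx`, up to the stated constants.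

*Multiple `t`-value.* Let `n` be the value (shifted to start at `0`) of the index with exponent `3`.
The indices below `n` contribute the elementary symmetric polynomial `A a n` in `1/(2k+1)^2`,
`k < n`, and those above `n` contribute a tail `β b n`, so
`T(a,b) = ∑_n A a n / (2n+1)^3 · β b n` (`T_eq`).

* The tail is a normalised moment: with `w_n = ∫_0^{π/2} sin^(2n+1)`, one has
  `w_n · β b n = ∫_0^{π/2} sin^(2n+1) x · (π/2 - x)^(2b)/(2b)! dx`. Two integrations by parts based on
  `(sin^m)'' = m(m-1) sin^(m-2) - m² sin^m` show that both sides obey the same recursion (`J_rec`,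
  `β_sub`, `tail_replicate`).
* The numbers `A a n` are the coefficients of the arcsine powers:
  `x^(2a+1)/(2a+1)! = ∑_n A a n · c_n · sin^(2n+1) x` on `[0, π/2)`, where
  `c_n = 1/((2n+1)^2 w_n)` (`hasSum_g`). The same formula for `(sin^m)''` shows that two
  differentiations turn the series for `a` into that for `a - 1`.

Multiplying the expansion by `cot x · (π/2 - x)^(2b+1)/(2b+1)!` and integrating term by term, which is
legitimate as all terms are nonnegative, gives `T(a,b) = I` (`T_eq_integral`).

*Zeta series.* From the Mittag-Leffler expansion of the cotangent,
`∑ ζ(2n) z^(2n) = -(πz/2) cot(πz)` for `0 < |z| < 1` (`hasSum_zeta`). Put `z = u/2`, multiply by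
`u^(2a) (1-u)^(2b+1)` and integrate over `[0,1]`: on the left, beta integrals produce the denominators
`(2n+2a+1)⋯(2n+2a+2b+2)` (`hasSum_integral_zeta`), and on the right the substitution `x = πu/2`
produces a multiple of `I`.
-/

open Real Finset

/-- The multiple t-value `t(s₁,…,s_r) = ∑_{1 ≤ k₁ < ⋯ < k_r} ∏ 1/(2k_i-1)^{s_i}`,
encoded via strictly increasing functions `f : Fin r → ℕ` with `k_i = f i + 1`,
so `2k_i - 1 = 2 f i + 1`. -/
noncomputable def mtv (s : List ℕ) : ℝ :=
  ∑' f : {f : Fin s.length → ℕ // StrictMono f},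
    ∏ i, (1 : ℝ) / ((2 * f.1 i + 1 : ℕ) : ℝ) ^ (s.get i)

/-- `T(a,b) = t({2}^a, 3, {2}^b)`. -/
noncomputable def T (a b : ℕ) : ℝ :=
  mtv (List.replicate a 2 ++ 3 :: List.replicate b 2)

open scoped ENNReal

namespace LupuT

/-! ### Nested sums -/

/-- The weight `1/(2n+1)^k` as an extended nonnegative real. -/
noncomputable def wt (k n : ℕ) : ℝ≥0∞ := ENNReal.ofReal (1 / ((2 * n + 1 : ℕ) : ℝ) ^ k)

/-- The tail of the multiple `t`-series in which all indices are at least `N`. -/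
noncomputable def tail (s : List ℕ) (N : ℕ) : ℝ≥0∞ :=
  open Classical in
  ∑' f : Fin s.length → ℕ,
    if StrictMono f ∧ ∀ i, N ≤ f i then ∏ i, wt (s.get i) (f i) else 0

/-- `sumFrom φ N = ∑_{n ≥ N} φ n`. -/
noncomputable def sumFrom (φ : ℕ → ℝ≥0∞) (N : ℕ) : ℝ≥0∞ := ∑' n, if N ≤ n then φ n else 0

lemma tail_nil (N : ℕ) : tail [] N = 1 := by
  unfold tail
  rw [tsum_eq_single (fun i => i.elim0)]
  · simp [Subsingleton.strictMono]
  · intro f hf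
    exact absurd (Subsingleton.elim (α := Fin 0 → ℕ) _ _) hf

/-- Splitting off the smallest index of the nested sum. -/
lemma tail_cons (k : ℕ) (s : List ℕ) (N : ℕ) :
    tail (k :: s) N = sumFrom (fun n => wt k n * tail s (n + 1)) N := by
  classical
  unfold tail sumFrom
  have e := (Fin.consEquiv (fun _ : Fin (s.length + 1) => ℕ)).tsum_eq
    (fun f : Fin (s.length + 1) → ℕ => if StrictMono f ∧ ∀ i, N ≤ f i then
      ∏ i, wt ((k :: s).get i) (f i) else (0 : ℝ≥0∞))
  refine e.symm.trans ?_
  rw [ENNReal.summable.tsum_prod' fun _ => ENNReal.summable]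
  refine tsum_congr fun n => ?_
  have hiff : ∀ g : Fin s.length → ℕ,
      (StrictMono (Fin.cons n g : Fin (s.length + 1) → ℕ) ∧
        ∀ i, N ≤ (Fin.cons n g : Fin (s.length + 1) → ℕ) i) ↔
      (N ≤ n ∧ (StrictMono g ∧ ∀ i, n + 1 ≤ g i)) := by
    intro g
    rw [Fin.strictMono_cons, Fin.forall_fin_succ]
    simp only [Fin.cons_zero, Fin.cons_succ]
    constructor
    · rintro ⟨⟨h1, h2⟩, h3, -⟩
      exact ⟨h3, h2, h1⟩
    · rintro ⟨h3, h2, h1⟩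
      exact ⟨⟨h1, h2⟩, h3, fun i => by have := h1 i; omega⟩
  split_ifs with hN
  · dsimp only
    rw [← ENNReal.tsum_mul_left]
    refine tsum_congr fun g => ?_
    have := hiff g
    simp only [hN, true_and] at this
    simp only [Fin.consEquiv, Equiv.coe_fn_mk, this]
    split_ifs
    · exact Fin.prod_univ_succ (n := s.length) _
    · simp
  · rw [ENNReal.tsum_eq_zero]
    intro g
    have := hiff g
    simp only [hN, false_and, iff_false] at this
    simp only [Fin.consEquiv, Equiv.coe_fn_mk, this, if_false]

/-- Adding an exponent `2` in front of the index, as an operator on tail functions. -/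
noncomputable def front (Φ : ℕ → ℝ≥0∞) : ℕ → ℝ≥0∞ := sumFrom fun n => wt 2 n * Φ (n + 1)

lemma tail_replicate_append (a : ℕ) (s : List ℕ) :
    tail (List.replicate a 2 ++ s) = front^[a] (tail s) := by
  induction a with
  | zero => rfl
  | succ a ih =>
    rw [Function.iterate_succ_apply', ← ih]
    funext N
    exact tail_cons _ _ _

/-- `A a n` is the `a`-th elementary symmetric polynomial of `1/(2k+1)^2`, `k < n`. -/
noncomputable def A : ℕ → ℕ → ℝ
  | 0, _ => 1
  | a + 1, n => ∑ k ∈ Finset.range n, A a k / (2 * k + 1) ^ 2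

lemma A_nonneg (a n : ℕ) : 0 ≤ A a n := by
  induction a generalizing n with
  | zero => simp [A]
  | succ a ih => exact Finset.sum_nonneg fun k _ => div_nonneg (ih k) (by positivity)

lemma ofReal_A_succ (a m : ℕ) : ENNReal.ofReal (A (a + 1) m) =
    ∑' n, if n + 1 ≤ m then ENNReal.ofReal (A a n) * wt 2 n else 0 := by
  rw [A, ENNReal.ofReal_sum_of_nonneg fun k _ => div_nonneg (A_nonneg a k) (by positivity),
    tsum_eq_sum (s := Finset.range m)]
  · refine Finset.sum_congr rfl fun k hk => ?_
    rw [if_pos (by simpa using hk), wt, ← ENNReal.ofReal_mul (A_nonneg a k)]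
    congr 1
    push_cast
    ring
  · intro k hk
    rw [if_neg (by simpa using hk)]

/-- Summing over the indices in front of `n` first produces the elementary symmetric polynomials:
the inductive step is one interchange of summation. -/
lemma front_iterate (a : ℕ) (φ : ℕ → ℝ≥0∞) :
    front^[a] (sumFrom φ) 0 = ∑' n, ENNReal.ofReal (A a n) * φ n := by
  induction a generalizing φ with
  | zero => simp [sumFrom, A]
  | succ a ih =>
    rw [Function.iterate_succ_apply, front, ih]
    simp only [sumFrom, ofReal_A_succ, ← ENNReal.tsum_mul_left, ← ENNReal.tsum_mul_right]
    rw [ENNReal.tsum_comm]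
    refine tsum_congr fun m => tsum_congr fun n => ?_
    split_ifs <;> ring

/-- No summability is needed: an infinite value becomes `0` under `toReal`, and a divergent real
`tsum` is `0` as well. -/
lemma mtv_eq (s : List ℕ) : mtv s = (tail s 0).toReal := by
  classical
  unfold mtv tail
  simp only [Nat.zero_le, implies_true, and_true]
  have : (∑' f : Fin s.length → ℕ, if StrictMono f then ∏ i, wt (s.get i) (f i) else 0) =
      ∑' f : {f : Fin s.length → ℕ // StrictMono f}, ∏ i, wt (s.get i) (f.1 i) := by
    have := tsum_subtype {f : Fin s.length → ℕ | StrictMono f}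
      (fun f => ∏ i, wt (s.get i) (f i))
    refine Eq.trans (tsum_congr fun f => ?_) this.symm
    simp [Set.indicator_apply]
  rw [this, ENNReal.tsum_toReal_eq]
  · refine tsum_congr fun f => ?_
    rw [ENNReal.toReal_prod]
    refine Finset.prod_congr rfl fun i _ => ?_
    rw [wt, ENNReal.toReal_ofReal (by positivity)]
  · intro f
    exact ENNReal.prod_ne_top fun i _ => ENNReal.ofReal_ne_top

/-- Grouping the series for `T a b` by the value of the index carrying the exponent `3`. -/
lemma T_eq (a b : ℕ) : T a b =
    (∑' n, ENNReal.ofReal (A a n) * (wt 3 n * tail (List.replicate b 2) (n + 1))).toReal := by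
  rw [T, mtv_eq, tail_replicate_append, ← front_iterate]
  have : tail (3 :: List.replicate b 2) =
      sumFrom fun n => wt 3 n * tail (List.replicate b 2) (n + 1) :=
    funext fun N => tail_cons _ _ _
  rw [this]

/-! ### Moments of powers of the sine -/

/-- The divided power `(π/2 - x)^j / j!`. -/
noncomputable def h (j : ℕ) (x : ℝ) : ℝ := (π / 2 - x) ^ j / (Nat.factorial j : ℝ)

/-- The Wallis number `∏_{i<n} (2i+2)/(2i+3)`, which is `∫ sin^(2n+1)` over `[0, π/2]`. -/
noncomputable def wal : ℕ → ℝ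
  | 0 => 1
  | n + 1 => wal n * ((2 * n + 2) / (2 * n + 3))

lemma wal_pos (n : ℕ) : 0 < wal n := by
  induction n with
  | zero => simp [wal]
  | succ n ih => rw [wal]; positivity

lemma continuous_h (j : ℕ) : Continuous (h j) := by
  unfold h; fun_prop

lemma hasDerivAt_h (j : ℕ) (x : ℝ) : HasDerivAt (h (j + 1)) (-h j x) x := by
  have h1 : HasDerivAt (fun x : ℝ => π / 2 - x) (-1) x := by
    simpa using (hasDerivAt_id x).const_sub (π / 2)
  refine ((h1.pow (j + 1)).div_const _).congr_deriv ?_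
  rw [h, Nat.factorial_succ]
  have := Nat.factorial_ne_zero j
  push_cast
  field_simp

lemma h_zero (x : ℝ) : h 0 x = 1 := by simp [h]

lemma h_succ_pi_div_two (j : ℕ) : h (j + 1) (π / 2) = 0 := by simp [h]

lemma h_nonneg (j : ℕ) {x : ℝ} (hx : x ≤ π / 2) : 0 ≤ h j x := by
  have : 0 ≤ π / 2 - x := by linarith
  unfold h
  positivity

/-- The moment `∫ sin^(2n+1) x (π/2 - x)^(2b)/(2b)!` over `[0, π/2]`. -/
noncomputable def J (b n : ℕ) : ℝ := ∫ x in (0 : ℝ)..π / 2, sin x ^ (2 * n + 1) * h (2 * b) x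

lemma J_zero_succ (n : ℕ) : J 0 (n + 1) = J 0 n * ((2 * n + 2) / (2 * n + 3)) := by
  unfold J
  simp only [Nat.mul_zero, h_zero, mul_one]
  rw [show 2 * (n + 1) + 1 = 2 * n + 1 + 2 by ring, integral_sin_pow]
  simp
  field_simp
  ring

lemma J_zero (n : ℕ) : J 0 n = wal n := by
  induction n with
  | zero => simp [J, wal, h_zero]
  | succ n ih => rw [J_zero_succ, ih, wal]

/-- Two integrations by parts, using `(sin^m)'' = m(m-1) sin^(m-2) - m² sin^m`. -/
lemma J_rec (b n : ℕ) :
    (2 * n + 3) * (2 * n + 2) * J (b + 1) n - (2 * n + 3) ^ 2 * J (b + 1) (n + 1)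
      = J b (n + 1) := by
  have hi : ∀ m j : ℕ, IntervalIntegrable (fun x => sin x ^ m * h j x) MeasureTheory.volume
      0 (π / 2) := fun m j =>
    ((continuous_sin.pow m).mul (continuous_h j)).intervalIntegrable _ _
  have hd : ∀ x ∈ Set.uIcc (0 : ℝ) (π / 2), HasDerivAt
      (fun x => (2 * n + 3 : ℝ) * (sin x ^ (2 * n + 2) * cos x) * h (2 * b + 1 + 1) x
        + sin x ^ (2 * n + 3) * h (2 * b + 1) x)
      ((2 * n + 3) * (2 * n + 2) * (sin x ^ (2 * n + 1) * h (2 * (b + 1)) x)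
        - (2 * n + 3) ^ 2 * (sin x ^ (2 * (n + 1) + 1) * h (2 * (b + 1)) x)
        - sin x ^ (2 * (n + 1) + 1) * h (2 * b) x) x := by
    intro x _
    have h1 := ((((hasDerivAt_sin x).pow (2 * n + 2)).mul (hasDerivAt_cos x)).const_mul
      (2 * n + 3 : ℝ)).mul (hasDerivAt_h (2 * b + 1) x)
    have h2 := ((hasDerivAt_sin x).pow (2 * n + 3)).mul (hasDerivAt_h (2 * b) x)
    refine (h1.add h2).congr_deriv ?_
    have e1 : 2 * n + 2 - 1 = 2 * n + 1 := by omega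
    have e2 : 2 * n + 3 - 1 = 2 * n + 2 := by omega
    simp only [Pi.pow_apply, Pi.mul_apply, e1, e2, show 2 * (b + 1) = 2 * b + 1 + 1 by ring]
    have hc : cos x * cos x = 1 - sin x ^ 2 := by rw [← sq, cos_sq']
    push_cast
    linear_combination (2 * n + 3) * (2 * n + 2) * sin x ^ (2 * n + 1) * h (2 * b + 1 + 1) x * hc
  have key := intervalIntegral.integral_eq_sub_of_hasDerivAt hd
    ((((hi _ _).const_mul _).sub ((hi _ _).const_mul _)).sub (hi _ _))
  rw [intervalIntegral.integral_sub (((hi _ _).const_mul _).sub ((hi _ _).const_mul _)) (hi _ _),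
    intervalIntegral.integral_sub ((hi _ _).const_mul _) ((hi _ _).const_mul _),
    intervalIntegral.integral_const_mul, intervalIntegral.integral_const_mul] at key
  simp [h_succ_pi_div_two] at key
  unfold J
  linarith

lemma J_nonneg (b n : ℕ) : 0 ≤ J b n := by
  refine intervalIntegral.integral_nonneg (by positivity) fun x hx => ?_
  exact mul_nonneg (pow_nonneg (sin_nonneg_of_nonneg_of_le_pi hx.1 (by linarith [hx.2, pi_pos])) _)
    (h_nonneg _ hx.2)

/-- Jordan's inequality `π/2 - x ≤ (π/2) cos x` bounds the moment by a multiple of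
`∫ sin^(2n+1) cos²`. -/
lemma J_succ_le (b n : ℕ) : J (b + 1) n ≤
    (π / 2) ^ (2 * (b + 1)) / (Nat.factorial (2 * (b + 1)) : ℝ) * (wal n / (2 * n + 3)) := by
  have e : wal n / (2 * n + 3) = ∫ x in (0 : ℝ)..π / 2, sin x ^ (2 * n + 1) * cos x ^ 2 := by
    have : ∀ x : ℝ, sin x ^ (2 * n + 1) * cos x ^ 2 =
        sin x ^ (2 * n + 1) * h (2 * 0) x - sin x ^ (2 * (n + 1) + 1) * h (2 * 0) x := by
      intro x
      rw [cos_sq', Nat.mul_zero, h_zero]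
      ring
    simp only [this]
    rw [intervalIntegral.integral_sub]
    · change _ = J 0 n - J 0 (n + 1)
      rw [J_zero, J_zero, wal]
      field_simp
      ring
    all_goals
      exact ((continuous_sin.pow _).mul (continuous_h _)).intervalIntegrable _ _
  rw [e, ← intervalIntegral.integral_const_mul]
  refine intervalIntegral.integral_mono_on (by positivity)
    (((continuous_sin.pow _).mul (continuous_h _)).intervalIntegrable _ _)
    ((by fun_prop : Continuous _).intervalIntegrable _ _) fun x hx => ?_
  have hs : 0 ≤ sin x := sin_nonneg_of_nonneg_of_le_pi hx.1 (by linarith [hx.2, pi_pos])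
  have hc0 : 0 ≤ cos x := cos_nonneg_of_neg_pi_div_two_le_of_le (by linarith [hx.1, pi_pos]) hx.2
  have hj : π / 2 - x ≤ π / 2 * cos x := by
    have := mul_le_sin (x := π / 2 - x) (by linarith [hx.2]) (by linarith [hx.1])
    rw [sin_pi_div_two_sub] at this
    have h2 := mul_le_mul_of_nonneg_left this (by positivity : (0 : ℝ) ≤ π / 2)
    have h3 : π / 2 * (2 / π * (π / 2 - x)) = π / 2 - x := by
      field_simp
    linarith
  have h1 : (π / 2 - x) ^ (2 * (b + 1)) ≤ (π / 2) ^ (2 * (b + 1)) * cos x ^ 2 :=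
    calc (π / 2 - x) ^ (2 * (b + 1)) ≤ (π / 2 * cos x) ^ (2 * (b + 1)) :=
          pow_le_pow_left₀ (by linarith [hx.2]) hj _
      _ = (π / 2) ^ (2 * (b + 1)) * cos x ^ (2 * (b + 1)) := mul_pow _ _ _
      _ ≤ _ := mul_le_mul_of_nonneg_left
          (pow_le_pow_of_le_one hc0 (cos_le_one x) (by omega)) (by positivity)
  have h2 : h (2 * (b + 1)) x ≤
      (π / 2) ^ (2 * (b + 1)) / (Nat.factorial (2 * (b + 1)) : ℝ) * cos x ^ 2 := by
    rw [h, div_mul_eq_mul_div]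
    exact div_le_div_of_nonneg_right h1 (by positivity)
  calc _ ≤ sin x ^ (2 * n + 1) *
        ((π / 2) ^ (2 * (b + 1)) / (Nat.factorial (2 * (b + 1)) : ℝ) * cos x ^ 2) :=
        mul_le_mul_of_nonneg_left h2 (pow_nonneg hs _)
    _ = _ := by ring

/-- The normalised moment, which turns out to be the tail `∑_{n < k₁ < ⋯ < k_b} ∏ 1/(2kᵢ+1)²`. -/
noncomputable def β (b n : ℕ) : ℝ := J b n / wal n

lemma β_nonneg (b n : ℕ) : 0 ≤ β b n := div_nonneg (J_nonneg b n) (wal_pos n).le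

lemma β_sub (b n : ℕ) :
    β (b + 1) n - β (b + 1) (n + 1) = β b (n + 1) / (2 * (n + 1 : ℕ) + 1) ^ 2 := by
  have := wal_pos n
  unfold β
  rw [← J_rec b n, wal]
  push_cast
  field_simp
  ring

lemma tendsto_β (b : ℕ) : Filter.Tendsto (β (b + 1)) Filter.atTop (nhds 0) := by
  set C := (π / 2) ^ (2 * (b + 1)) / (Nat.factorial (2 * (b + 1)) : ℝ) with hC
  have hC0 : 0 ≤ C := by positivity
  refine squeeze_zero (g := fun n : ℕ => C * (1 / ((n : ℝ) + 1))) (β_nonneg _) (fun n => ?_) ?_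
  · have hw := wal_pos n
    rw [β, div_le_iff₀ hw]
    refine (J_succ_le b n).trans ?_
    rw [← hC, mul_assoc]
    refine mul_le_mul_of_nonneg_left ?_ hC0
    rw [div_mul_eq_mul_div, one_mul]
    exact div_le_div_of_nonneg_left hw.le (by positivity) (by linarith [(n.cast_nonneg : (0:ℝ) ≤ n)])
  · simpa using tendsto_one_div_add_atTop_nhds_zero_nat.const_mul C

/-- Telescoping `β_sub`; together with `tendsto_β` this is the recursion of the nested sum. -/
lemma hasSum_β (b n : ℕ) :
    HasSum (fun k : ℕ => β b (n + 1 + k) / (2 * (n + 1 + k : ℕ) + 1) ^ 2) (β (b + 1) n) := by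
  rw [hasSum_iff_tendsto_nat_of_nonneg fun k => div_nonneg (β_nonneg _ _) (by positivity)]
  have : ∀ N, ∑ k ∈ Finset.range N, β b (n + 1 + k) / (2 * (n + 1 + k : ℕ) + 1) ^ 2 =
      β (b + 1) n - β (b + 1) (n + N) := by
    intro N
    have h0 := Finset.sum_range_sub' (fun k => β (b + 1) (n + k)) N
    refine Eq.trans ?_ h0
    refine Finset.sum_congr rfl fun k _ => ?_
    have := β_sub b (n + k)
    rw [show n + 1 + k = n + k + 1 by ring, ← this]
    rfl
  simp only [this]
  have h2 : Filter.Tendsto (fun N => β (b + 1) (n + N)) Filter.atTop (nhds 0) :=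
    by
    simpa only [add_comm n] using (Filter.tendsto_add_atTop_iff_nat n).2 (tendsto_β b)
  simpa using h2.const_sub (β (b + 1) n)

lemma sumFrom_eq (φ : ℕ → ℝ≥0∞) (N : ℕ) : sumFrom φ N = ∑' k, φ (N + k) := by
  unfold sumFrom
  have := (add_right_injective N).tsum_eq (f := fun n => if N ≤ n then φ n else 0) (by
    intro n hn
    have : N ≤ n := by
      by_contra hh
      simp [hh] at hn
    exact ⟨n - N, by simp; omega⟩)
  rw [← this]
  simp

/-- The nested sum over the indices above `n`, all with exponent `2`, is a normalised moment. -/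
lemma tail_replicate (b n : ℕ) :
    tail (List.replicate b 2) (n + 1) = ENNReal.ofReal (β b n) := by
  induction b generalizing n with
  | zero =>
    rw [List.replicate_zero, tail_nil, β, J_zero, div_self (wal_pos n).ne', ENNReal.ofReal_one]
  | succ b ih =>
    rw [List.replicate_succ, tail_cons, sumFrom_eq, ← (hasSum_β b n).tsum_eq,
      ENNReal.ofReal_tsum_of_nonneg (fun k => div_nonneg (β_nonneg _ _) (by positivity))
        (hasSum_β b n).summable]
    refine tsum_congr fun k => ?_
    rw [ih, wt, ← ENNReal.ofReal_mul (by positivity)]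
    congr 1
    push_cast
    ring

/-- Integration by parts, in the form matching the middle exponent `3`. -/
lemma integral_sin_pow_cos (b n : ℕ) :
    ∫ x in (0 : ℝ)..π / 2, sin x ^ (2 * n) * cos x * h (2 * b + 1) x = J b n / (2 * n + 1) := by
  have hd : ∀ x ∈ Set.uIcc (0 : ℝ) (π / 2), HasDerivAt
      (fun x => sin x ^ (2 * n + 1) * h (2 * b + 1) x)
      ((2 * n + 1) * (sin x ^ (2 * n) * cos x * h (2 * b + 1) x) -
        sin x ^ (2 * n + 1) * h (2 * b) x) x := by
    intro x _
    refine (((hasDerivAt_sin x).pow (2 * n + 1)).mul (hasDerivAt_h (2 * b) x)).congr_deriv ?_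
    simp only [Pi.pow_apply, Nat.add_sub_cancel]
    push_cast
    ring
  have hc := continuous_h (2 * b)
  have hc' := continuous_h (2 * b + 1)
  have i1 : IntervalIntegrable (fun x => (2 * n + 1 : ℝ) * (sin x ^ (2 * n) * cos x *
      h (2 * b + 1) x)) MeasureTheory.volume 0 (π / 2) :=
    (by fun_prop : Continuous _).intervalIntegrable _ _
  have i2 : IntervalIntegrable (fun x => sin x ^ (2 * n + 1) * h (2 * b) x)
      MeasureTheory.volume 0 (π / 2) := (by fun_prop : Continuous _).intervalIntegrable _ _
  have key := intervalIntegral.integral_eq_sub_of_hasDerivAt hd (i1.sub i2)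
  rw [intervalIntegral.integral_sub i1 i2, intervalIntegral.integral_const_mul] at key
  simp [h_succ_pi_div_two] at key
  rw [eq_div_iff (by positivity), J]
  linarith

/-! ### Expansion of `x^(2a+1)/(2a+1)!` in odd powers of `sin x` -/

/-- The coefficient of `sin^(2n+1)` in the expansion of `x`; it equals `C(2n,n)/(4^n (2n+1))`. -/
noncomputable def c (n : ℕ) : ℝ := 1 / ((2 * n + 1) ^ 2 * wal n)

lemma c_pos (n : ℕ) : 0 < c n := by
  have := wal_pos n
  unfold c
  positivity

lemma le_wal (n : ℕ) : 1 / (2 * n + 1) ≤ wal n := by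
  induction n with
  | zero => simp [wal]
  | succ n ih =>
    rw [wal]
    calc (1 : ℝ) / (2 * (n + 1 : ℕ) + 1) ≤ 1 / (2 * n + 1) * ((2 * n + 2) / (2 * n + 3)) := by
          rw [div_mul_div_comm, div_le_div_iff₀ (by positivity) (by positivity)]
          push_cast
          nlinarith [(n.cast_nonneg : (0 : ℝ) ≤ n)]
      _ ≤ _ := mul_le_mul_of_nonneg_right ih (by positivity)

lemma A_le (a n : ℕ) : A a n ≤ (n : ℝ) ^ a := by
  induction a generalizing n with
  | zero => simp [A]
  | succ a ih =>
    rw [A]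
    calc _ ≤ ∑ k ∈ Finset.range n, (n : ℝ) ^ a := by
          refine Finset.sum_le_sum fun k hk => ?_
          have hk' : (k : ℝ) ≤ n := by exact_mod_cast (Finset.mem_range.1 hk).le
          refine (div_le_self (A_nonneg a k) ?_).trans
            ((ih k).trans (pow_le_pow_left₀ (by positivity) hk' a))
          exact one_le_pow₀ (by linarith [(k.cast_nonneg : (0 : ℝ) ≤ k)])
      _ = _ := by
          rw [Finset.sum_const, Finset.card_range, nsmul_eq_mul, pow_succ]
          ring

/-- Partial sums of the expansion `∑ P n c_n sin^(2n+1) x`. -/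
noncomputable def F (P : ℕ → ℝ) (N : ℕ) (x : ℝ) : ℝ :=
  ∑ n ∈ Finset.range N, P n * c n * sin x ^ (2 * n + 1)

/-- First derivative of `F`. -/
noncomputable def F' (P : ℕ → ℝ) (N : ℕ) (x : ℝ) : ℝ :=
  ∑ n ∈ Finset.range N, P n * c n * ((2 * n + 1) * sin x ^ (2 * n) * cos x)

lemma hasDerivAt_F (P : ℕ → ℝ) (N : ℕ) (x : ℝ) : HasDerivAt (F P N) (F' P N x) x := by
  unfold F F'
  refine HasDerivAt.fun_sum fun n _ => ?_
  refine (((hasDerivAt_sin x).fun_pow (2 * n + 1)).const_mul _).congr_deriv ?_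
  simp only [Nat.add_sub_cancel]
  push_cast
  ring

lemma hasDerivAt_sin_pow_mul_cos (n : ℕ) (x : ℝ) :
    HasDerivAt (fun x => (2 * n + 1 : ℝ) * sin x ^ (2 * n) * cos x)
      ((2 * n + 1) * (2 * n) * sin x ^ (2 * n - 1) - (2 * n + 1) ^ 2 * sin x ^ (2 * n + 1)) x := by
  refine ((((hasDerivAt_sin x).fun_pow (2 * n)).const_mul (2 * n + 1 : ℝ)).mul
    (hasDerivAt_cos x)).congr_deriv ?_
  rcases n with _ | n
  · simp
  · have hc : cos x * cos x = 1 - sin x ^ 2 := by rw [← sq, cos_sq']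
    rw [show 2 * (n + 1) - 1 = 2 * n + 1 by omega]
    push_cast
    linear_combination (2 * n + 3 : ℝ) * (2 * n + 2) * sin x ^ (2 * n + 1) * hc

/-- The truncated expansion satisfies `F'' = F(Q) - (boundary term)`, where the coefficients `Q`
are obtained from `P` by differencing. -/
lemma hasDerivAt_F' (P Q : ℕ → ℝ) (hPQ : ∀ n : ℕ, P (n + 1) - P n = Q n / (2 * n + 1) ^ 2)
    (M : ℕ) (x : ℝ) :
    HasDerivAt (F' P (M + 1))
      (F Q (M + 1) x - P (M + 1) / wal M * sin x ^ (2 * M + 1)) x := by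
  have h1 : HasDerivAt (F' P (M + 1)) (∑ n ∈ Finset.range (M + 1), P n * c n *
      ((2 * n + 1) * (2 * n) * sin x ^ (2 * n - 1) - (2 * n + 1) ^ 2 * sin x ^ (2 * n + 1))) x :=
    HasDerivAt.fun_sum fun n _ => (hasDerivAt_sin_pow_mul_cos n x).const_mul _
  refine h1.congr_deriv ?_
  have hQ : ∀ n : ℕ, Q n = (P (n + 1) - P n) * (2 * n + 1) ^ 2 := fun n => by
    rw [hPQ]; field_simp
  unfold F
  induction M with
  | zero =>
    simp [hQ, c, wal]
    ring
  | succ M ih =>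
    rw [Finset.sum_range_succ, ih, Finset.sum_range_succ _ (M + 1)]
    · rw [hQ (M + 1), c, wal, show 2 * (M + 1) - 1 = 2 * M + 1 by omega]
      have := wal_pos M
      push_cast
      field_simp
      ring
    · exact HasDerivAt.fun_sum fun n _ => (hasDerivAt_sin_pow_mul_cos n x).const_mul _

/-- A function with `f 0 = f' 0 = 0` and `|f''| ≤ ε` on `[0, r]`, `r ≤ 2`, is at most `4ε`. -/
lemma abs_le_of_second_deriv {f f' f'' : ℝ → ℝ} {r ε : ℝ} (hr : r ≤ 2)
    (hf : ∀ x, HasDerivAt f (f' x) x) (hf' : ∀ x, HasDerivAt f' (f'' x) x)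
    (h0 : f 0 = 0) (h0' : f' 0 = 0) (hb : ∀ x ∈ Set.Icc 0 r, |f'' x| ≤ ε) :
    ∀ x ∈ Set.Icc 0 r, |f x| ≤ 4 * ε := by
  intro x hx
  have hr0 : (0 : ℝ) ∈ Set.Icc 0 r := ⟨le_rfl, hx.1.trans hx.2⟩
  have hε : 0 ≤ ε := (abs_nonneg _).trans (hb 0 hr0)
  have h1 : ∀ y ∈ Set.Icc 0 r, |f' y| ≤ 2 * ε := by
    intro y hy
    have := (convex_Icc 0 r).norm_image_sub_le_of_norm_hasDerivWithin_le
      (fun z _ => (hf' z).hasDerivWithinAt) hb hr0 hy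
    rw [h0', sub_zero, sub_zero, norm_eq_abs, norm_eq_abs, abs_of_nonneg hy.1] at this
    nlinarith [hy.2]
  have := (convex_Icc 0 r).norm_image_sub_le_of_norm_hasDerivWithin_le
    (fun z _ => (hf z).hasDerivWithinAt) h1 hr0 hx
  rw [h0, sub_zero, sub_zero, norm_eq_abs, norm_eq_abs, abs_of_nonneg hx.1] at this
  nlinarith [hx.2]

/-- The divided power `x^(2a+1)/(2a+1)!`. -/
noncomputable def g (a : ℕ) (x : ℝ) : ℝ := x ^ (2 * a + 1) / (Nat.factorial (2 * a + 1) : ℝ)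

/-- The boundary term in `hasDerivAt_F'` is polynomial in `M` times `sin r ^ (2M+1)`. -/
lemma boundary_le (a M : ℕ) {r x : ℝ} (hr : r ≤ π / 2) (hx : x ∈ Set.Icc 0 r) :
    |A a (M + 1) / wal M * sin x ^ (2 * M + 1)| ≤
      ((2 * M + 1 : ℕ) : ℝ) ^ (a + 1) * sin r ^ (2 * M + 1) := by
  have hw := wal_pos M
  have hs : 0 ≤ sin x := sin_nonneg_of_nonneg_of_le_pi hx.1 (by linarith [hx.2, pi_pos])
  have hsr : sin x ≤ sin r := sin_le_sin_of_le_of_le_pi_div_two (by linarith [hx.1, pi_pos]) hr hx.2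
  have hA := A_nonneg a (M + 1)
  rw [abs_of_nonneg (by positivity)]
  refine mul_le_mul ?_ (pow_le_pow_left₀ hs hsr _) (by positivity) (by positivity)
  rw [div_le_iff₀ hw]
  have h1 : (1 : ℝ) ≤ (2 * M + 1) * wal M := by
    have := le_wal M
    rw [div_le_iff₀ (by positivity)] at this
    linarith
  have h2 : A a (M + 1) ≤ ((2 * M + 1 : ℕ) : ℝ) ^ a := by
    rcases M with _ | M
    · simpa using A_le a 1
    · exact (A_le a _).trans (pow_le_pow_left₀ (by positivity) (by push_cast; linarith) _)
  calc A a (M + 1) ≤ ((2 * M + 1 : ℕ) : ℝ) ^ a * 1 := by rwa [mul_one]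
    _ ≤ ((2 * M + 1 : ℕ) : ℝ) ^ a * ((2 * M + 1) * wal M) :=
      mul_le_mul_of_nonneg_left h1 (by positivity)
    _ = _ := by push_cast; ring

lemma tendsto_boundary (a : ℕ) {s : ℝ} (hs : 0 ≤ s) (hs1 : s < 1) :
    Filter.Tendsto (fun M : ℕ => ((2 * M + 1 : ℕ) : ℝ) ^ (a + 1) * s ^ (2 * M + 1))
      Filter.atTop (nhds 0) :=
  (tendsto_pow_const_mul_const_pow_of_lt_one (a + 1) hs hs1).comp
    (Filter.tendsto_atTop_mono (fun n => by simp; omega) Filter.tendsto_id :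
      Filter.Tendsto (fun M : ℕ => 2 * M + 1) Filter.atTop Filter.atTop)

/-- `x^(2a+1)/(2a+1)!` is the sum of `A a n * c n * sin^(2n+1) x`, uniformly on `[0, r]` for
`r < π/2`: the error `f` satisfies `f'' = (error for a - 1) + (boundary term)`. -/
lemma exists_error_bound (a : ℕ) {r : ℝ} (hr0 : 0 ≤ r) (hr : r < π / 2) :
    ∃ e : ℕ → ℝ, Filter.Tendsto e Filter.atTop (nhds 0) ∧
      ∀ M, ∀ x ∈ Set.Icc 0 r, |g a x - F (A a) (M + 1) x| ≤ e M := by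
  have hr2 : r ≤ 2 := by linarith [pi_le_four]
  have hs0 : 0 ≤ sin r := sin_nonneg_of_nonneg_of_le_pi hr0 (by linarith [pi_pos])
  have hs1 : sin r < 1 := by
    rw [← sin_pi_div_two]
    exact sin_lt_sin_of_lt_of_le_pi_div_two (by linarith [pi_pos]) le_rfl hr
  have hF0 : ∀ P N, F P N 0 = 0 := fun P N => Finset.sum_eq_zero fun n _ => by simp
  have hF'0 : ∀ P N, F' P (N + 1) 0 = P 0 := fun P N => by
    rw [F', Finset.sum_range_succ', Finset.sum_eq_zero fun n _ => by simp]
    simp [c, wal]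
  induction a with
  | zero =>
    refine ⟨fun M => 4 * (((2 * M + 1 : ℕ) : ℝ) ^ (0 + 1) * sin r ^ (2 * M + 1)), by
      simpa only [mul_zero] using (tendsto_boundary 0 hs0 hs1).const_mul 4, fun M => ?_⟩
    refine abs_le_of_second_deriv (f' := fun x => 1 - F' (A 0) (M + 1) x)
      (f'' := fun x => A 0 (M + 1) / wal M * sin x ^ (2 * M + 1)) hr2 (fun x => ?_) (fun x => ?_)
      (by simp [g, hF0]) (by simp [hF'0, A]) fun x hx => boundary_le 0 M hr.le hx
    · refine HasDerivAt.sub ?_ (hasDerivAt_F _ _ _)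
      have hg : g 0 = id := by ext; simp [g]
      exact hg ▸ hasDerivAt_id x
    · refine ((hasDerivAt_F' (A 0) (fun _ => 0) (by simp [A]) M x).const_sub 1).congr_deriv ?_
      simp [F]
  | succ a ih =>
    obtain ⟨e, he, hb⟩ := ih
    refine ⟨fun M => 4 * (e M + ((2 * M + 1 : ℕ) : ℝ) ^ (a + 1 + 1) * sin r ^ (2 * M + 1)), by
      simpa only [add_zero, mul_zero] using
        (he.add (tendsto_boundary (a + 1) hs0 hs1)).const_mul 4, fun M => ?_⟩
    refine abs_le_of_second_deriv
      (f' := fun x => x ^ (2 * a + 2) / (Nat.factorial (2 * a + 2) : ℝ) - F' (A (a + 1)) (M + 1) x)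
      (f'' := fun x => (g a x - F (A a) (M + 1) x) +
        A (a + 1) (M + 1) / wal M * sin x ^ (2 * M + 1)) hr2 (fun x => ?_) (fun x => ?_)
      (by simp [g, hF0]) (by simp [hF'0, A])
      fun x hx => (abs_add_le _ _).trans (add_le_add (hb M x hx) (boundary_le (a + 1) M hr.le hx))
    · refine HasDerivAt.sub ?_ (hasDerivAt_F _ _ _)
      refine ((hasDerivAt_pow (2 * a + 3) x).div_const _).congr_deriv ?_
      rw [show 2 * (a + 1) + 1 = 2 * a + 2 + 1 by ring, Nat.factorial_succ (2 * a + 2)]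
      have := Nat.factorial_ne_zero (2 * a + 2)
      push_cast
      field_simp
      ring
    · have h1 : HasDerivAt (fun x : ℝ => x ^ (2 * a + 2) / (Nat.factorial (2 * a + 2) : ℝ))
          (g a x) x := by
        refine ((hasDerivAt_pow (2 * a + 2) x).div_const _).congr_deriv ?_
        rw [g, Nat.factorial_succ (2 * a + 1)]
        have := Nat.factorial_ne_zero (2 * a + 1)
        push_cast
        field_simp
        ring
      refine (h1.sub (hasDerivAt_F' (A (a + 1)) (A a) (fun n => ?_) M x)).congr_deriv (by ring)
      rw [A, A, Finset.sum_range_succ]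
      ring

/-- The expansion of `arcsin^(2a+1)/(2a+1)!`, with `x` in the role of the arcsine. -/
lemma hasSum_g (a : ℕ) {x : ℝ} (hx0 : 0 ≤ x) (hx : x < π / 2) :
    HasSum (fun n => A a n * c n * sin x ^ (2 * n + 1)) (g a x) := by
  have hs : 0 ≤ sin x := sin_nonneg_of_nonneg_of_le_pi hx0 (by linarith [pi_pos])
  rw [hasSum_iff_tendsto_nat_of_nonneg fun n =>
    mul_nonneg (mul_nonneg (A_nonneg a n) (c_pos n).le) (pow_nonneg hs _)]
  obtain ⟨e, he, hb⟩ := exists_error_bound a hx0 hx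
  rw [← Filter.tendsto_add_atTop_iff_nat 1, tendsto_iff_norm_sub_tendsto_zero]
  refine squeeze_zero (fun _ => norm_nonneg _) (fun M => ?_) he
  rw [norm_sub_rev]
  exact hb M x ⟨hx0, le_rfl⟩

/-! ### The integral representation of `T a b` -/

/-- The integrand of the integral representation of `T a b`. -/
noncomputable def G (a b : ℕ) (x : ℝ) : ℝ := g a x * (cos x / sin x) * h (2 * b + 1) x

/-- The contribution of a single value `n` of the index carrying the exponent `3`. -/
lemma ofReal_term (a b n : ℕ) :
    ENNReal.ofReal (A a n) * (wt 3 n * tail (List.replicate b 2) (n + 1)) =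
      ∫⁻ x in Set.Ioo 0 (π / 2), ENNReal.ofReal
        (A a n * c n * (sin x ^ (2 * n) * cos x * h (2 * b + 1) x)) := by
  have hw := wal_pos n
  have hcont : Continuous fun x => A a n * c n * (sin x ^ (2 * n) * cos x * h (2 * b + 1) x) := by
    have := continuous_h (2 * b + 1)
    fun_prop
  rw [← MeasureTheory.ofReal_integral_eq_lintegral_ofReal]
  · rw [← MeasureTheory.integral_Ioc_eq_integral_Ioo,
      ← intervalIntegral.integral_of_le (by positivity), intervalIntegral.integral_const_mul,
      integral_sin_pow_cos, tail_replicate, wt, ← ENNReal.ofReal_mul (by positivity),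
      ← ENNReal.ofReal_mul (A_nonneg a n)]
    congr 1
    rw [β, c]
    push_cast
    field_simp
  · exact (hcont.integrableOn_Icc (a := 0) (b := π / 2)).mono_set Set.Ioo_subset_Icc_self
  · refine (MeasureTheory.ae_restrict_iff' measurableSet_Ioo).2 (.of_forall fun x hx => ?_)
    refine mul_nonneg (mul_nonneg (A_nonneg a n) (c_pos n).le)
      (mul_nonneg (mul_nonneg (pow_nonneg ?_ _) ?_) (h_nonneg _ hx.2.le))
    · exact sin_nonneg_of_nonneg_of_le_pi hx.1.le (by linarith [hx.2, pi_pos])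
    · exact cos_nonneg_of_neg_pi_div_two_le_of_le (by linarith [hx.1, pi_pos]) hx.2.le

/-- The integral representation
`T a b = ∫ x^(2a+1)/(2a+1)! · (π/2 - x)^(2b+1)/(2b+1)! · cot x` over `[0, π/2]`. -/
lemma T_eq_integral (a b : ℕ) : T a b = ∫ x in (0 : ℝ)..π / 2, G a b x := by
  have hmeas : Measurable (G a b) := by
    unfold G g
    have := (continuous_h (2 * b + 1)).measurable
    fun_prop
  have hterm : ∀ n, Measurable fun x : ℝ => ENNReal.ofReal
        (A a n * c n * (sin x ^ (2 * n) * cos x * h (2 * b + 1) x)) := by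
    intro n
    have := (continuous_h (2 * b + 1)).measurable
    fun_prop
  rw [T_eq, intervalIntegral.integral_of_le (by positivity),
    MeasureTheory.integral_Ioc_eq_integral_Ioo,
    MeasureTheory.integral_eq_lintegral_of_nonneg_ae _ hmeas.aestronglyMeasurable]
  · simp only [ofReal_term]
    rw [← MeasureTheory.lintegral_tsum fun n => (hterm n).aemeasurable]
    congr 1
    refine MeasureTheory.setLIntegral_congr_fun measurableSet_Ioo fun x hx => ?_
    have hs : 0 < sin x := sin_pos_of_pos_of_lt_pi hx.1 (by linarith [hx.2, pi_pos])
    have hc : 0 ≤ cos x :=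
      cos_nonneg_of_neg_pi_div_two_le_of_le (by linarith [hx.1, pi_pos]) hx.2.le
    have hh := h_nonneg (2 * b + 1) hx.2.le
    have hsum := ((hasSum_g a hx.1.le hx.2).mul_right (cos x / sin x)).mul_right (h (2 * b + 1) x)
    have he : ∀ n, A a n * c n * sin x ^ (2 * n + 1) * (cos x / sin x) * h (2 * b + 1) x =
        A a n * c n * (sin x ^ (2 * n) * cos x * h (2 * b + 1) x) := by
      intro n
      rw [pow_succ]
      field_simp
    simp only [he] at hsum
    rw [← ENNReal.ofReal_tsum_of_nonneg (fun n => ?_) hsum.summable, hsum.tsum_eq, G]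
    exact mul_nonneg (mul_nonneg (A_nonneg a n) (c_pos n).le)
      (mul_nonneg (mul_nonneg (pow_nonneg hs.le _) hc) hh)
  · refine (MeasureTheory.ae_restrict_iff' measurableSet_Ioo).2 (.of_forall fun x hx => ?_)
    have hs : 0 < sin x := sin_pos_of_pos_of_lt_pi hx.1 (by linarith [hx.2, pi_pos])
    have hc : 0 ≤ cos x :=
      cos_nonneg_of_neg_pi_div_two_le_of_le (by linarith [hx.1, pi_pos]) hx.2.le
    have hx0 := hx.1.le
    exact mul_nonneg (mul_nonneg (by unfold g; positivity) (div_nonneg hc hs.le))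
      (h_nonneg _ hx.2.le)

/-! ### The zeta series as an integral -/

lemma zeta_two_mul_succ (n : ℕ) :
    riemannZeta (2 * (n + 1 : ℕ)) = ∑' k : ℕ, 1 / ((k : ℂ) + 1) ^ (2 * (n + 1)) := by
  have hs : Summable fun k : ℕ => 1 / (k : ℂ) ^ (2 * (n + 1)) := by
    rw [← summable_norm_iff]
    simpa using Real.summable_one_div_nat_pow.2 (show 1 < 2 * (n + 1) by omega)
  have := zeta_nat_eq_tsum_of_gt_one (show 1 < 2 * (n + 1) by omega)
  rw [hs.tsum_eq_zero_add] at this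
  push_cast at this ⊢
  rw [this]
  simp

/-- The even zeta generating function: `∑ ζ(2n) z^(2n) = -(πz/2) cot(πz)`, obtained from the
Mittag-Leffler expansion of the cotangent by expanding each term as a geometric series. -/
lemma hasSum_zeta {z : ℂ} (hz0 : z ≠ 0) (hz : ‖z‖ < 1) :
    HasSum (fun n : ℕ => riemannZeta (2 * n) * z ^ (2 * n))
      (-(π * z / 2) * Complex.cot (π * z)) := by
  set f : ℕ × ℕ → ℂ := fun p => (z / ((p.1 : ℂ) + 1)) ^ (2 * (p.2 + 1)) with hf
  have hk : ∀ k : ℕ, ‖(k : ℂ) + 1‖ = (k : ℝ) + 1 := fun k => by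
    rw [← Nat.cast_succ, Complex.norm_natCast, Nat.cast_succ]
  have hk0 : ∀ k : ℕ, (k : ℂ) + 1 ≠ 0 := fun k => Nat.cast_add_one_ne_zero k
  have hsum : Summable f := by
    have h1 : Summable fun k : ℕ => 1 / ((k : ℝ) + 1) ^ 2 := by
      have := (summable_nat_add_iff 1).2 (Real.summable_one_div_nat_pow.2 one_lt_two)
      simpa using this
    have h2 : Summable fun n : ℕ => (‖z‖ ^ 2) ^ (n + 1) :=
      (summable_nat_add_iff 1).2
        (summable_geometric_of_lt_one (by positivity) (pow_lt_one₀ (norm_nonneg z) hz two_ne_zero))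
    refine Summable.of_norm_bounded (h1.mul_of_nonneg h2 (fun k => by positivity)
      fun n => by positivity) fun p => ?_
    rw [hf, norm_pow, norm_div, hk, div_pow, pow_mul ‖z‖, div_eq_mul_one_div, mul_comm]
    refine mul_le_mul_of_nonneg_right ?_ (by positivity)
    refine one_div_le_one_div_of_le (by positivity) (pow_le_pow_right₀ ?_ (by omega))
    linarith [(p.1.cast_nonneg : (0 : ℝ) ≤ p.1)]
  have hrow : ∀ k : ℕ, ∑' n, f (k, n) =
      -(z / 2) * (1 / (z - (k + 1)) + 1 / (z + (k + 1))) := by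
    intro k
    set q := z / ((k : ℂ) + 1) with hq
    have hq1 : ‖q ^ 2‖ < 1 := by
      rw [norm_pow]
      refine pow_lt_one₀ (norm_nonneg _) ?_ two_ne_zero
      rw [hq, norm_div, hk, div_lt_one (by positivity)]
      linarith [(k.cast_nonneg : (0 : ℝ) ≤ k)]
    have h1 : ∀ n, f (k, n) = q ^ 2 * (q ^ 2) ^ n := fun n => by
      simp only [hf, ← hq]; rw [pow_mul, pow_succ']
    simp only [h1]
    rw [tsum_mul_left, tsum_geometric_of_norm_lt_one hq1]
    have hn : ‖z‖ < ‖(k : ℂ) + 1‖ := by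
      rw [hk]; linarith [(k.cast_nonneg : (0 : ℝ) ≤ k)]
    have d1 : z - (k + 1) ≠ 0 := fun h0 => by
      rw [sub_eq_zero.1 h0] at hn; exact lt_irrefl _ hn
    have d2 : z + (k + 1) ≠ 0 := fun h0 => by
      rw [eq_neg_of_add_eq_zero_left h0, norm_neg] at hn; exact lt_irrefl _ hn
    have d3 : 1 - q ^ 2 ≠ 0 := fun h0 => by
      rw [← sub_eq_zero.1 h0] at hq1; simp at hq1
    have d4 := hk0 k
    have e : (1 - q ^ 2) * ((k : ℂ) + 1) ^ 2 = -((z - (k + 1)) * (z + (k + 1))) := by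
      rw [hq]; field_simp; ring
    have e2 : q ^ 2 * ((k : ℂ) + 1) ^ 2 = z ^ 2 := by rw [hq]; field_simp
    rw [← div_eq_mul_inv, div_add_div _ _ d1 d2, ← mul_div_assoc, div_eq_div_iff d3
      (mul_ne_zero d1 d2)]
    apply mul_right_cancel₀ (pow_ne_zero 2 d4)
    linear_combination (z - (k + 1)) * (z + (k + 1)) * e2 + z ^ 2 * e
  have hcol : ∀ n : ℕ, ∑' k, f (k, n) =
      riemannZeta (2 * (n + 1 : ℕ)) * z ^ (2 * (n + 1)) := by
    intro n
    rw [zeta_two_mul_succ, ← tsum_mul_right]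
    refine tsum_congr fun k => ?_
    simp only [hf]
    rw [div_pow]
    ring
  have hzZ : z ∈ Complex.integerComplement := by
    rintro ⟨m, rfl⟩
    rw [Complex.norm_intCast] at hz
    have : |m| < 1 := by exact_mod_cast hz
    exact hz0 (by simp [Int.abs_lt_one_iff.1 this])
  have hcot := cot_series_rep' hzZ
  have htot : ∑' n, ∑' k, f (k, n) = -(z / 2) * (π * Complex.cot (π * z) - 1 / z) := by
    rw [hcot, ← tsum_mul_left, ← tsum_congr hrow]
    exact Summable.tsum_comm (f := fun k n => f (k, n)) hsum
  have hS : HasSum (fun n => ∑' k, f (k, n))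
      (-(z / 2) * (π * Complex.cot (π * z) - 1 / z)) := by
    rw [← htot]
    exact (hsum.prod_symm.prod).hasSum
  simp only [hcol] at hS
  rw [← hasSum_nat_add_iff' 1]
  convert! hS using 1
  simp [riemannZeta_zero]
  field_simp
  ring

lemma integral_beta (m k : ℕ) : ∫ u in (0 : ℝ)..1, (u : ℂ) ^ m * (1 - (u : ℂ)) ^ k =
    (Nat.factorial k : ℂ) / ∏ j ∈ Finset.range (k + 1), ((m + 1 + j : ℕ) : ℂ) := by
  have hb := Complex.betaIntegral_eval_nat_add_one_right (u := (m + 1 : ℂ))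
    (by simp; positivity) k
  unfold Complex.betaIntegral at hb
  simp only [add_sub_cancel_right, Complex.cpow_natCast] at hb
  rw [hb]
  push_cast
  rfl

/-- Integrating the zeta generating function at `z = u/2` against `u^(2a) (1-u)^(2b+1)`: each term
gives a beta integral, which is the product in the denominator. -/
lemma hasSum_integral_zeta (a b : ℕ) :
    HasSum (fun n : ℕ => (Nat.factorial (2 * b + 1) : ℂ) * (riemannZeta (2 * n) /
        ((∏ j ∈ Finset.range (2 * b + 2), ((2 * n + 2 * a + 1 + j : ℕ) : ℂ)) * 2 ^ (2 * n))))
      (∫ u in (0 : ℝ)..1, (-(π * (u / 2) / 2) * Complex.cot (π * (u / 2))) *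
        ((u : ℂ) ^ (2 * a) * (1 - (u : ℂ)) ^ (2 * b + 1))) := by
  have hint : ∀ n : ℕ, ∫ u in (0 : ℝ)..1, riemannZeta (2 * n) * ((u : ℂ) / 2) ^ (2 * n) *
      ((u : ℂ) ^ (2 * a) * (1 - (u : ℂ)) ^ (2 * b + 1)) =
      (Nat.factorial (2 * b + 1) : ℂ) * (riemannZeta (2 * n) /
        ((∏ j ∈ Finset.range (2 * b + 2), ((2 * n + 2 * a + 1 + j : ℕ) : ℂ)) * 2 ^ (2 * n))) := by
    intro n
    have h1 : ∀ u : ℝ, riemannZeta (2 * n) * ((u : ℂ) / 2) ^ (2 * n) *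
      ((u : ℂ) ^ (2 * a) * (1 - (u : ℂ)) ^ (2 * b + 1)) = riemannZeta (2 * n) / 2 ^ (2 * n) *
        ((u : ℂ) ^ (2 * n + 2 * a) * (1 - (u : ℂ)) ^ (2 * b + 1)) := fun u => by
      rw [div_pow, pow_add]; ring
    simp only [h1]
    rw [intervalIntegral.integral_const_mul, integral_beta]
    rw [div_mul_div_comm, mul_comm (2 ^ (2 * n) : ℂ), mul_div_assoc', mul_comm (riemannZeta _)]
  simp only [← hint]
  have hz12 : Summable fun n : ℕ => ‖riemannZeta (2 * n) * (1 / 2 : ℂ) ^ (2 * n)‖ :=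
    (hasSum_zeta (z := 1 / 2) (by norm_num) (by norm_num)).summable.norm
  refine intervalIntegral.hasSum_integral_of_dominated_convergence
    (fun n _ => ‖riemannZeta (2 * n) * (1 / 2 : ℂ) ^ (2 * n)‖) (fun n => ?_) (fun n => ?_)
    (.of_forall fun _ _ => hz12) ?_ (.of_forall fun u hu => ?_)
  · exact (by fun_prop : Continuous _).aestronglyMeasurable
  · refine .of_forall fun u hu => ?_
    rw [Set.uIoc_of_le zero_le_one] at hu
    have hu1 : ‖(u : ℂ)‖ ≤ 1 := by
      rw [Complex.norm_real, norm_eq_abs, abs_of_nonneg hu.1.le]; exact hu.2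
    have hu2 : ‖1 - (u : ℂ)‖ ≤ 1 := by
      rw [← Complex.ofReal_one, ← Complex.ofReal_sub, Complex.norm_real, norm_eq_abs,
        abs_of_nonneg (by linarith [hu.2])]
      linarith [hu.1]
    rw [show (u : ℂ) / 2 = u * (1 / 2) by ring, mul_pow, norm_mul, norm_mul, norm_mul, norm_mul,
      norm_mul, norm_pow (u : ℂ), norm_pow (u : ℂ), norm_pow (1 - (u : ℂ))]
    have p1 := pow_le_one₀ (n := 2 * n) (norm_nonneg _) hu1
    have p2 : ‖(u : ℂ)‖ ^ (2 * a) * ‖1 - (u : ℂ)‖ ^ (2 * b + 1) ≤ 1 :=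
      mul_le_one₀ (pow_le_one₀ (norm_nonneg _) hu1) (by positivity)
        (pow_le_one₀ (norm_nonneg _) hu2)
    calc _ ≤ ‖riemannZeta (2 * n)‖ * (1 * ‖(1 / 2 : ℂ) ^ (2 * n)‖) * 1 := by gcongr
      _ = _ := by ring
  · exact intervalIntegrable_const
  · rw [Set.uIoc_of_le zero_le_one] at hu
    refine (hasSum_zeta (z := (u : ℂ) / 2) ?_ ?_).mul_right _
    · have : (u : ℂ) ≠ 0 := by exact_mod_cast hu.1.ne'
      exact div_ne_zero this two_ne_zero
    · rw [norm_div, Complex.norm_real, norm_eq_abs, abs_of_nonneg hu.1.le]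
      have := hu.2
      simp
      linarith

/-- Under `x = πu/2` the integrand of the zeta series becomes a constant multiple of `G a b`. -/
lemma integrand_eq (a b : ℕ) (u : ℝ) :
    (π / 2 : ℂ) ^ (2 * a + 2 * b + 2) * ((-(π * (u / 2) / 2) * Complex.cot (π * (u / 2))) *
        ((u : ℂ) ^ (2 * a) * (1 - (u : ℂ)) ^ (2 * b + 1))) =
    -(π / 4) * (Nat.factorial (2 * a + 1) * Nat.factorial (2 * b + 1) : ℂ) *
      (G a b (π / 2 * u) : ℂ) := by
  have h1 := Nat.factorial_ne_zero (2 * a + 1)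
  have h2 := Nat.factorial_ne_zero (2 * b + 1)
  have e1 : (π : ℂ) / 2 - π / 2 * u = π / 2 * (1 - u) := by ring
  have e2 : (π : ℂ) * (u / 2) = π / 2 * u := by ring
  rw [G, g, h, Complex.cot]
  push_cast
  rw [e1, e2, mul_pow, mul_pow]
  field_simp
  ring

end LupuT

/-- Lupu's second conjecture (Theorem 1.5): for all nonnegative integers `a`, `b`,
`T(a,b) = -2/(2a+1)! · (π/2)^{2a+2b+2} · ∑_{n≥0} ζ(2n)/((2n+2a+1)⋯(2n+2a+2b+2)·2^{2n})`. -/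
theorem lupu_conjecture_T (a b : ℕ) :
    (T a b : ℂ) = (-2 / (Nat.factorial (2 * a + 1) : ℂ)) * ((π : ℂ) / 2) ^ (2 * a + 2 * b + 2) *
      ∑' n : ℕ, riemannZeta (2 * n) /
        ((∏ j ∈ Finset.range (2 * b + 2), ((2 * n + 2 * a + 1 + j : ℕ) : ℂ)) * 2 ^ (2 * n)) := by
  have h1 : (Nat.factorial (2 * a + 1) : ℂ) ≠ 0 := by exact_mod_cast Nat.factorial_ne_zero _
  have h2 : (Nat.factorial (2 * b + 1) : ℂ) ≠ 0 := by exact_mod_cast Nat.factorial_ne_zero _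
  have hπ : (π : ℂ) ≠ 0 := by exact_mod_cast pi_ne_zero
  have hS := (LupuT.hasSum_integral_zeta a b).tsum_eq
  rw [tsum_mul_left] at hS
  -- The substitution `x = πu/2` turns the integral over `[0, 1]` into that of `G a b`.
  have hI : ∫ u in (0 : ℝ)..1, (LupuT.G a b (π / 2 * u) : ℂ) = 2 / π * (T a b : ℂ) := by
    rw [intervalIntegral.integral_ofReal,
      intervalIntegral.integral_comp_mul_left (LupuT.G a b) (by positivity), mul_zero, mul_one,
      ← LupuT.T_eq_integral]
    simp
  have hJ := congrArg (fun z => ((π : ℂ) / 2) ^ (2 * a + 2 * b + 2) * z) hS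
  rw [← intervalIntegral.integral_const_mul] at hJ
  simp only [LupuT.integrand_eq] at hJ
  rw [intervalIntegral.integral_const_mul, hI] at hJ
  generalize (∑' n : ℕ, riemannZeta (2 * n) / ((∏ j ∈ Finset.range (2 * b + 2),
    ((2 * n + 2 * a + 1 + j : ℕ) : ℂ)) * 2 ^ (2 * n))) = S at hJ ⊢
  rw [div_mul_eq_mul_div, div_mul_eq_mul_div, eq_div_iff h1]
  field_simp at hJ
  linear_combination (1 / 2 : ℂ) * hJ
end

section
/- For all nonnegative integers a and b, the multiple zeta value H(a,b) = ζ({2}^a, 3, {2}^b) admits the integral expression H(a,b) = (π^{2b} · 2^{2a+3} / ((2a+2)!(2b+1)!)) · ∫_0^{π/2} x^{2a+2} (1 - (2/π)x)^{2b+1} cot(x) dx. -/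
/-!
Let `L` be the operator `(L φ)(n) = ∑_{m > n} φ(m) / m²` on sequences with values in `[0, ∞]`.
Summing over the largest indices first,
`H(a, b) = (L^{a+1} φ)(0)` with `φ(m) = (L^b 1)(m) / m`.

The link with integrals is the family `u_n(x) = sin^{2n} x / W_n`, where `W_n = C(2n, n) / 4^n`,
which satisfies `u_{n+1}'' = 4 (n+1)² (u_n - u_{n+1})`. Green's formula (`green`) turns this into
telescoping relations, and so converts `L` into an operation on integrals in two ways.

* Against `(π/2 - x)^{2b} / (2b)!` on `[0, π/2]`, it gives by induction
  `(L^b 1)(n) = 4^b (2/π) ∫ (π/2 - x)^{2b} / (2b)! u_n(x) dx` (`iterate_one`). One more integration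
  by parts yields `φ(m) = 4^b (4/π) ∫ (π/2 - x)^{2b+1} / (2b+1)! cot x u_m(x) dx` for `m ≥ 1`
  (`lintegral_q_cot`).
* Against `4 (x - y)` on `[0, x]` with `x < π/2`, it shows that `L`, acting on the index of `u_n(x)`,
  is four times the double primitive from `0` (`tailSum_u`). As `u_0 = 1`, iterating gives
  `L^k (u_·(x))(0) = (2x)^{2k} / (2k)!` (`iterate_u`), which is the power series of `arcsin^{2k}`.

Since `L` commutes with integrals of nonnegative functions (`lintegral_iterate`), applying
`L^{a+1}` at `0` under the integral for `φ` replaces `u_m(x)` by `(2x)^{2a+2} / (2a+2)!`, and this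
is the claimed formula.
-/

open Real Finset

open scoped ENNReal
open MeasureTheory

namespace HIntegral

/-! ### Multiple zeta values as iterated tail sums -/

/-- The operator `(tailSum c φ)(n) = ∑_{m > n} φ(m) / m ^ c`, with values in `[0, ∞]`. -/
noncomputable def tailSum (c : ℕ) (φ : ℕ → ℝ≥0∞) (n : ℕ) : ℝ≥0∞ :=
  ∑' j : ℕ, ENNReal.ofReal (1 / ((n + j + 1 : ℕ) : ℝ) ^ c) * φ (n + j + 1)

/-- A strictly increasing sequence of naturals amounts to its first term together with the gaps,
less one, between that term and the later ones. -/
def strictMonoEquiv (k : ℕ) :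
    {f : Fin (k + 1) → ℕ // StrictMono f} ≃ ℕ × {f : Fin k → ℕ // StrictMono f} where
  toFun f := (f.1 0, ⟨fun i => f.1 i.succ - (f.1 0 + 1), by
    intro i j hij
    have h1 : f.1 0 < f.1 i.succ := f.2 (Fin.succ_pos i)
    have h2 : f.1 i.succ < f.1 j.succ := f.2 (Fin.succ_lt_succ_iff.2 hij)
    show f.1 i.succ - (f.1 0 + 1) < f.1 j.succ - (f.1 0 + 1)
    omega⟩)
  invFun p := ⟨Fin.cons p.1 (fun i => p.1 + 1 + p.2.1 i), by
    intro i j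
    refine Fin.cases ?_ (fun i => ?_) i <;> refine Fin.cases ?_ (fun j => ?_) j
    · exact fun h => absurd h (lt_irrefl _)
    · intro _
      show p.1 < p.1 + 1 + p.2.1 j
      omega
    · exact fun h => absurd h (Fin.not_lt_zero _)
    · intro h
      have := p.2.2 (Fin.succ_lt_succ_iff.1 h)
      show p.1 + 1 + p.2.1 i < p.1 + 1 + p.2.1 j
      omega⟩
  left_inv f := by
    ext i
    refine Fin.cases ?_ (fun i => ?_) i
    · rfl
    · have h1 : f.1 0 < f.1 i.succ := f.2 (Fin.succ_pos i)
      show f.1 0 + 1 + (f.1 i.succ - (f.1 0 + 1)) = f.1 i.succ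
      omega
  right_inv p := by
    refine Prod.ext rfl (Subtype.ext (funext fun i => ?_))
    show p.1 + 1 + p.2.1 i - (p.1 + 1) = p.2.1 i
    omega

/-- Nested form of a multiple zeta value: summing first over the largest indices, the sum over
`n < k₁ < ⋯ < k_r` is an iterate of the operators `tailSum`. -/
lemma tsum_strictMono_eq_foldr (s : List ℕ) (n : ℕ) :
    ∑' f : {f : Fin s.length → ℕ // StrictMono f},
      ∏ i, ENNReal.ofReal (1 / ((n + f.1 i + 1 : ℕ) : ℝ) ^ (s.get i)) =
    s.foldr tailSum (fun _ => 1) n := by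
  induction s generalizing n with
  | nil =>
    have : Unique {f : Fin ([] : List ℕ).length → ℕ // StrictMono f} :=
      { default := ⟨fun i => i.elim0, fun i => i.elim0⟩
        uniq := fun f => Subtype.ext (funext fun i => i.elim0) }
    rw [tsum_eq_single default (fun b hb => absurd (Unique.eq_default b) hb)]
    simp
  | cons c s ih =>
    rw [List.foldr_cons, tailSum]
    refine ((strictMonoEquiv s.length).symm.tsum_eq
      (fun f : {f : Fin (s.length + 1) → ℕ // StrictMono f} =>
      ∏ i : Fin (s.length + 1),
        ENNReal.ofReal (1 / ((n + f.1 i + 1 : ℕ) : ℝ) ^ ((c :: s).get i)))).symm.trans ?_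
    rw [ENNReal.tsum_prod']
    refine tsum_congr fun j => ?_
    rw [← ih, ← ENNReal.tsum_mul_left]
    refine tsum_congr fun f => ?_
    rw [Fin.prod_univ_succ]
    have e0 : ((strictMonoEquiv s.length).symm (j, f)).1 0 = j := rfl
    have e1 : ∀ i : Fin s.length,
      ((strictMonoEquiv s.length).symm (j, f)).1 i.succ = j + 1 + f.1 i := fun i => rfl
    simp only [e0, e1]
    congr 1
    refine Finset.prod_congr rfl fun i _ => ?_
    rw [show n + (j + 1 + f.1 i) + 1 = n + j + 1 + f.1 i + 1 by omega]
    rfl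

lemma mzv_eq_toReal (s : List ℕ) :
    mzv s = (s.foldr tailSum (fun _ => 1) 0).toReal := by
  rw [← tsum_strictMono_eq_foldr, ENNReal.tsum_toReal_eq]
  · unfold mzv
    refine tsum_congr fun f => ?_
    rw [ENNReal.toReal_prod]
    refine Finset.prod_congr rfl fun i _ => ?_
    rw [ENNReal.toReal_ofReal (by positivity), Nat.zero_add]
  · intro f
    exact ENNReal.prod_ne_top fun i _ => ENNReal.ofReal_ne_top

lemma H_eq_toReal (a b : ℕ) :
    H a b = ((tailSum 2)^[a + 1]
      (fun m => ENNReal.ofReal (1 / (m : ℝ)) * (tailSum 2)^[b] (fun _ => 1) m) 0).toReal := by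
  have key : ∀ (k : ℕ) (l : List ℕ),
      (List.replicate k 2 ++ l).foldr tailSum (fun _ => 1) =
        (tailSum 2)^[k] (l.foldr tailSum (fun _ => 1)) := by
    intro k l
    induction k with
    | zero => rfl
    | succ k ih =>
      rw [List.replicate_succ, List.cons_append, List.foldr_cons, ih, Function.iterate_succ_apply']
  have hb : (List.replicate b 2).foldr tailSum (fun _ => 1) =
      (tailSum 2)^[b] (fun _ => 1) := by
    simpa using key b []
  rw [H, mzv_eq_toReal, key, List.foldr_cons, hb, Function.iterate_succ_apply]
  refine congrArg (fun g => ((tailSum 2)^[a] g 0).toReal) (funext fun n => ?_)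
  unfold tailSum
  refine tsum_congr fun j => ?_
  rw [← mul_assoc, ← ENNReal.ofReal_mul (by positivity)]
  congr 2
  have : ((n + j + 1 : ℕ) : ℝ) ≠ 0 := by positivity
  field_simp

lemma measurable_iterate {F : ℕ → ℝ → ℝ≥0∞} (hF : ∀ m, Measurable (F m)) (k n : ℕ) :
    Measurable fun x => (tailSum 2)^[k] (fun m => F m x) n := by
  induction k generalizing n with
  | zero => exact hF n
  | succ k ih =>
    simp only [Function.iterate_succ_apply']
    unfold tailSum at ih ⊢
    exact Measurable.tsum fun j => (ih _).const_mul _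

/-- Iterated tail sums commute with integration against a nonnegative weight (Tonelli). -/
lemma lintegral_iterate {F : ℕ → ℝ → ℝ≥0∞} (hF : ∀ m, Measurable (F m)) {w : ℝ → ℝ≥0∞}
    (hw : Measurable w) (μ : Measure ℝ) (k n : ℕ) :
    ∫⁻ x, w x * (tailSum 2)^[k] (fun m => F m x) n ∂μ =
      (tailSum 2)^[k] (fun m => ∫⁻ x, w x * F m x ∂μ) n := by
  induction k generalizing n with
  | zero => rfl
  | succ k ih =>
    simp only [Function.iterate_succ_apply']
    rw [tailSum]
    simp only [← ih]
    simp only [tailSum.eq_1 2 (_ ^[k] _), ← ENNReal.tsum_mul_left]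
    rw [lintegral_tsum]
    · refine tsum_congr fun j => ?_
      rw [← lintegral_const_mul _ (by exact hw.mul (measurable_iterate hF k _))]
      refine lintegral_congr fun x => ?_
      ring
    · intro j
      exact (hw.mul ((measurable_iterate hF k _).const_mul _)).aemeasurable

/-- Telescoping: a null sequence is the tail sum of its decrements. -/
lemma ofReal_eq_tailSum {v f : ℕ → ℝ} (hf : ∀ m, 0 ≤ f m)
    (hv : ∀ m : ℕ, v m - v (m + 1) = f (m + 1) / ((m : ℝ) + 1) ^ 2)
    (h0 : Filter.Tendsto v Filter.atTop (nhds 0)) (n : ℕ) :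
    tailSum 2 (fun m => ENNReal.ofReal (f m)) n = ENNReal.ofReal (v n) := by
  have h1 : HasSum (fun j => v (n + j) - v (n + (j + 1))) (v n) := by
    rw [hasSum_iff_tendsto_nat_of_nonneg]
    · have : ∀ N, ∑ i ∈ Finset.range N, (v (n + i) - v (n + (i + 1))) = v n - v (n + N) := by
        intro N
        simpa using Finset.sum_range_sub' (fun i => v (n + i)) N
      simp only [this]
      have h2 : Filter.Tendsto (fun N => v (n + N)) Filter.atTop (nhds 0) := by
        simpa [add_comm] using (Filter.tendsto_add_atTop_iff_nat n).2 h0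
      simpa using h2.const_sub (v n)
    · intro j
      rw [← add_assoc, hv]
      have := hf (n + j + 1)
      positivity
  rw [← h1.tsum_eq, ENNReal.ofReal_tsum_of_nonneg _ h1.summable]
  · unfold tailSum
    refine tsum_congr fun j => ?_
    rw [← ENNReal.ofReal_mul (by positivity), ← add_assoc, hv]
    congr 1
    push_cast
    ring
  · intro j
    rw [← add_assoc, hv]
    have := hf (n + j + 1)
    positivity

/-! ### Normalised even powers of the sine -/

/-- The normalised central binomial coefficient `W n = C(2n, n) / 4 ^ n`, which is also
`(2 / π) ∫_0^{π/2} sin ^ (2n)`. -/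
noncomputable def W (n : ℕ) : ℝ := (n.centralBinom : ℝ) / 4 ^ n

lemma W_pos (n : ℕ) : 0 < W n := by
  have := Nat.centralBinom_pos n
  unfold W
  positivity

lemma W_zero : W 0 = 1 := by simp [W]

lemma W_succ (n : ℕ) : W (n + 1) = (2 * n + 1) / (2 * n + 2) * W n := by
  have h := Nat.succ_mul_centralBinom_succ n
  have h' : ((n : ℝ) + 1) * ((n + 1).centralBinom : ℝ) = 2 * (2 * n + 1) * n.centralBinom := by
    exact_mod_cast h
  unfold W
  rw [pow_succ]
  field_simp
  linear_combination 2 * h'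

/-- `u n x = sin x ^ (2n) / W n`. These functions satisfy
`(u (n+1))'' = 4 (n+1)² (u n - u (n+1))`. -/
noncomputable def u (n : ℕ) (x : ℝ) : ℝ := sin x ^ (2 * n) / W n

lemma u_nonneg (n : ℕ) (x : ℝ) : 0 ≤ u n x := by
  have := W_pos n
  have : 0 ≤ sin x ^ (2 * n) := by rw [pow_mul]; positivity
  unfold u
  positivity

@[fun_prop]
lemma continuous_u (n : ℕ) : Continuous (u n) := by unfold u; fun_prop

/-- Green's formula for a `C²` function `f` against `u (m+1)`, which satisfies a second-order
differential recursion and vanishes to second order at `0`. -/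
lemma green {f f1 f2 : ℝ → ℝ} (h1 : ∀ x, HasDerivAt f (f1 x) x)
    (h2 : ∀ x, HasDerivAt f1 (f2 x) x) (h3 : Continuous f2) (m : ℕ) (c : ℝ) :
    (∫ x in (0 : ℝ)..c, f x * (u m x - u (m + 1) x)) -
      (∫ x in (0 : ℝ)..c, f2 x * u (m + 1) x) / (4 * ((m : ℝ) + 1) ^ 2) =
    f c * (sin c ^ (2 * m + 1) * cos c / (2 * ((m : ℝ) + 1) * W (m + 1))) -
      f1 c * (u (m + 1) c / (4 * ((m : ℝ) + 1) ^ 2)) := by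
  have hc : Continuous f := continuous_iff_continuousAt.2 fun x => (h1 x).continuousAt
  have hW := (W_pos (m + 1)).ne'
  have hW' := (W_pos m).ne'
  have hm : ((m : ℝ) + 1) ≠ 0 := by positivity
  rw [← intervalIntegral.integral_div, ← intervalIntegral.integral_sub]
  rotate_left
  · exact Continuous.intervalIntegrable (by fun_prop) _ _
  · exact Continuous.intervalIntegrable (by fun_prop) _ _
  have hd : ∀ x, HasDerivAt (fun x => f x *
      (sin x ^ (2 * m + 1) * cos x / (2 * ((m : ℝ) + 1) * W (m + 1))) -
      f1 x * (u (m + 1) x / (4 * ((m : ℝ) + 1) ^ 2)))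
      (f x * (u m x - u (m + 1) x) - f2 x * u (m + 1) x / (4 * ((m : ℝ) + 1) ^ 2)) x := by
    intro x
    have hs1 := (((hasDerivAt_sin x).pow (2 * m + 1)).mul (hasDerivAt_cos x)).div_const
      (2 * ((m : ℝ) + 1) * W (m + 1))
    have hs2 := (((hasDerivAt_sin x).pow (2 * (m + 1))).div_const (W (m + 1))).div_const
      (4 * ((m : ℝ) + 1) ^ 2)
    have hd := ((h1 x).mul hs1).sub ((h2 x).mul hs2)
    refine hd.congr_deriv ?_
    have hcos := Real.cos_sq' x
    simp only [u, W_succ, Pi.mul_apply, Pi.pow_apply, Nat.add_sub_cancel,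
      show 2 * (m + 1) = 2 * m + 2 by omega, pow_succ]
    have h4 : (2 * (m : ℝ) + 1) ≠ 0 := by positivity
    push_cast
    field_simp
    rw [hcos]
    ring
  rw [intervalIntegral.integral_eq_sub_of_hasDerivAt (fun x _ => hd x)
    (Continuous.intervalIntegrable (by fun_prop) _ _)]
  simp [u]

lemma inv_W_le (n : ℕ) : 1 / W (n + 1) ≤ 2 * (n + 1) := by
  have h : ((4 ^ (n + 1) : ℕ) : ℝ) ≤ ((2 * (n + 1) * (n + 1).centralBinom : ℕ) : ℝ) :=
    Nat.cast_le.2 (Nat.four_pow_le_two_mul_self_mul_centralBinom (n + 1) n.succ_pos)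
  push_cast at h
  rw [div_le_iff₀ (W_pos _), W, mul_div_assoc', le_div_iff₀ (by positivity)]
  linarith

lemma tendsto_u {x : ℝ} (h0 : 0 ≤ x) (h1 : x < π / 2) :
    Filter.Tendsto (fun n => u n x) Filter.atTop (nhds 0) := by
  rw [← Filter.tendsto_add_atTop_iff_nat 1]
  have hs0 : 0 ≤ sin x := sin_nonneg_of_nonneg_of_le_pi h0 (by linarith [pi_pos])
  have hs1 : sin x < 1 := by
    rw [← sin_pi_div_two]
    exact sin_lt_sin_of_lt_of_le_pi_div_two (by linarith) le_rfl h1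
  have hr : sin x ^ 2 < 1 := by nlinarith
  have h := (tendsto_self_mul_const_pow_of_lt_one (sq_nonneg (sin x)) hr)
  have h' := ((Filter.tendsto_add_atTop_iff_nat 1).2 h).const_mul 2
  rw [mul_zero] at h'
  refine squeeze_zero (fun n => u_nonneg _ _) (fun n => ?_) h'
  have h3 := mul_le_mul_of_nonneg_left (inv_W_le n) (pow_nonneg (sq_nonneg (sin x)) (n + 1))
  rw [← pow_mul] at h3
  calc u (n + 1) x = sin x ^ (2 * (n + 1)) * (1 / W (n + 1)) := by rw [u]; ring
    _ ≤ _ := h3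
    _ = _ := by rw [pow_mul]; push_cast; ring

/-- One tail sum of `u` in the index is the solution of `v'' = 4 u`, `v(0) = v'(0) = 0`. -/
lemma tailSum_u {x : ℝ} (h0 : 0 ≤ x) (h1 : x < π / 2) (n : ℕ) :
    tailSum 2 (fun m => ENNReal.ofReal (u m x)) n =
      ∫⁻ y in Set.Ioc 0 x, ENNReal.ofReal (4 * (x - y)) * ENNReal.ofReal (u n y) := by
  have hint : ∀ m, ∀ c d : ℝ, IntervalIntegrable (fun y => 4 * (x - y) * u m y) volume c d :=
    fun m c d => Continuous.intervalIntegrable (by fun_prop) _ _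
  rw [ofReal_eq_tailSum (v := fun m => ∫ y in (0 : ℝ)..x, 4 * (x - y) * u m y)
    (fun m => u_nonneg m x)]
  · rw [intervalIntegral.integral_of_le h0, ofReal_integral_eq_lintegral_ofReal (hint n 0 x).1]
    · refine setLIntegral_congr_fun measurableSet_Ioc fun y hy => ?_
      have : 0 ≤ 4 * (x - y) := by linarith [hy.2]
      exact ENNReal.ofReal_mul this
    · refine (ae_restrict_iff' measurableSet_Ioc).2 (Filter.Eventually.of_forall fun y hy => ?_)
      have : 0 ≤ 4 * (x - y) := by linarith [hy.2]
      exact mul_nonneg this (u_nonneg n y)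
  · intro m
    have hg := green (f := fun y => 4 * (x - y)) (f1 := fun _ => -4) (f2 := fun _ => 0)
      (fun y => by simpa using ((hasDerivAt_id y).const_sub x).const_mul 4)
      (fun y => hasDerivAt_const _ _) continuous_const m x
    rw [← intervalIntegral.integral_sub (hint _ _ _) (hint _ _ _)]
    have hm : ((m : ℝ) + 1) ≠ 0 := by positivity
    simp only [sub_self, mul_zero, zero_mul, intervalIntegral.integral_zero, zero_div, sub_zero,
      zero_sub, mul_sub] at hg ⊢
    rw [hg]
    field_simp
  · have hlim := (tendsto_u h0 h1).const_mul (∫ y in (0 : ℝ)..x, 4 * (x - y))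
    rw [mul_zero] at hlim
    refine squeeze_zero (fun m => ?_) (fun m => ?_) hlim
    · refine intervalIntegral.integral_nonneg h0 fun y hy => mul_nonneg ?_ (u_nonneg m y)
      linarith [hy.2]
    · rw [← intervalIntegral.integral_mul_const]
      refine intervalIntegral.integral_mono_on h0 (hint _ _ _)
        (Continuous.intervalIntegrable (by fun_prop) _ _) fun y hy => ?_
      refine mul_le_mul_of_nonneg_left ?_ (by linarith [hy.2])
      have hsy : 0 ≤ sin y := sin_nonneg_of_nonneg_of_le_pi hy.1 (by linarith [pi_pos, hy.2])
      have hle : sin y ≤ sin x :=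
        sin_le_sin_of_le_of_le_pi_div_two (by linarith [hy.1, pi_pos]) h1.le hy.2
      exact div_le_div_of_nonneg_right (pow_le_pow_left₀ hsy hle _) (W_pos m).le

lemma measurable_ofReal_u (m : ℕ) : Measurable fun x => ENNReal.ofReal (u m x) :=
  (continuous_u m).measurable.ennreal_ofReal

lemma integral_pow_step (x : ℝ) (k : ℕ) :
    ∫ y in (0 : ℝ)..x, 4 * (x - y) * ((2 * y) ^ (2 * k) / (2 * k).factorial) =
      (2 * x) ^ (2 * (k + 1)) / (2 * (k + 1)).factorial := by
  have hd : ∀ y ∈ Set.uIcc 0 x, HasDerivAt (fun y => 2 * (x - y) *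
      ((2 * y) ^ (2 * k + 1) / (2 * k + 1).factorial) +
      (2 * y) ^ (2 * k + 2) / (2 * k + 2).factorial)
      (4 * (x - y) * ((2 * y) ^ (2 * k) / (2 * k).factorial)) y := by
    intro y _
    have e1 := ((hasDerivAt_id y).const_sub x).const_mul 2
    have e2 := (((hasDerivAt_id y).const_mul 2).pow (2 * k + 1)).div_const
      ((2 * k + 1).factorial : ℝ)
    have e3 := (((hasDerivAt_id y).const_mul 2).pow (2 * k + 2)).div_const
      ((2 * k + 2).factorial : ℝ)
    refine ((e1.mul e2).add e3).congr_deriv ?_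
    have hk : ((2 * k).factorial : ℝ) ≠ 0 := by positivity
    have : (2 * (k : ℝ) + 1) ≠ 0 := by positivity
    have : (2 * (k : ℝ) + 2) ≠ 0 := by positivity
    have : (2 * (k : ℝ) + 1 + 1) ≠ 0 := by positivity
    simp only [Nat.factorial_succ, Pi.pow_apply, id, Nat.add_sub_cancel,
      show 2 * k + 2 - 1 = 2 * k + 1 by omega, pow_succ]
    push_cast
    field_simp
    ring
  rw [intervalIntegral.integral_eq_sub_of_hasDerivAt hd
    (Continuous.intervalIntegrable (by fun_prop) _ _)]
  simp [mul_add]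

/-- The power series of even powers of `arcsin`, in the variable `sin x`, in nested form. By
Tonelli, the `k`-fold tail sum of `u` at `0` is the `k`-fold double primitive of `4 ^ k * u 0`,
and `u 0 = 1`. -/
lemma iterate_u {x : ℝ} (h0 : 0 ≤ x) (h1 : x < π / 2) (k : ℕ) :
    (tailSum 2)^[k] (fun m => ENNReal.ofReal (u m x)) 0 =
      ENNReal.ofReal ((2 * x) ^ (2 * k) / (2 * k).factorial) := by
  induction k generalizing x with
  | zero => simp [u, W_zero]
  | succ k ih =>
    rw [Function.iterate_succ_apply, funext (tailSum_u h0 h1),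
      ← lintegral_iterate measurable_ofReal_u
        (w := fun y => ENNReal.ofReal (4 * (x - y))) (by fun_prop), ← integral_pow_step,
      intervalIntegral.integral_of_le h0, ofReal_integral_eq_lintegral_ofReal]
    · refine setLIntegral_congr_fun measurableSet_Ioc fun y hy => ?_
      have : 0 ≤ 4 * (x - y) := by linarith [hy.2]
      rw [ih hy.1.le (hy.2.trans_lt h1), ENNReal.ofReal_mul this]
    · exact (Continuous.intervalIntegrable (by fun_prop) _ _ :
        IntervalIntegrable _ volume 0 x).1
    · refine (ae_restrict_iff' measurableSet_Ioc).2 (Filter.Eventually.of_forall fun y hy => ?_)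
      have : 0 ≤ x - y := by linarith [hy.2]
      have := hy.1
      simp only [Pi.zero_apply]
      positivity

/-! ### Moments of even powers of the sine -/

/-- The weights `p b x = (π/2 - x)^(2b) / (2b)!`, where `p (b+1)` has second derivative `p b`. -/
noncomputable def p (b : ℕ) (x : ℝ) : ℝ := (π / 2 - x) ^ (2 * b) / (2 * b).factorial

/-- The weights `q b x = (π/2 - x)^(2b+1) / (2b+1)!`, a primitive of `-p b`. -/
noncomputable def q (b : ℕ) (x : ℝ) : ℝ := (π / 2 - x) ^ (2 * b + 1) / (2 * b + 1).factorial

@[fun_prop]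
lemma continuous_p (b : ℕ) : Continuous (p b) := by unfold p; fun_prop

@[fun_prop]
lemma continuous_q (b : ℕ) : Continuous (q b) := by unfold q; fun_prop

lemma p_nonneg (b : ℕ) (x : ℝ) : 0 ≤ p b x := by
  have : 0 ≤ (π / 2 - x) ^ (2 * b) := by rw [pow_mul]; positivity
  unfold p
  positivity

lemma q_nonneg (b : ℕ) {x : ℝ} (h : x ≤ π / 2) : 0 ≤ q b x := by
  have : 0 ≤ π / 2 - x := by linarith
  unfold q
  positivity

lemma hasDerivAt_q (b : ℕ) (x : ℝ) : HasDerivAt (q b) (-p b x) x := by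
  refine ((((hasDerivAt_id x).const_sub (π / 2)).pow (2 * b + 1)).div_const
    ((2 * b + 1).factorial : ℝ)).congr_deriv ?_
  have : ((2 * b).factorial : ℝ) ≠ 0 := by positivity
  have : (2 * (b : ℝ) + 1) ≠ 0 := by positivity
  simp only [p, Nat.factorial_succ, Nat.add_sub_cancel, id]
  push_cast
  field_simp

lemma hasDerivAt_p (b : ℕ) (x : ℝ) : HasDerivAt (p (b + 1)) (-q b x) x := by
  refine ((((hasDerivAt_id x).const_sub (π / 2)).pow (2 * (b + 1))).div_const
    ((2 * (b + 1)).factorial : ℝ)).congr_deriv ?_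
  have : ((2 * b + 1).factorial : ℝ) ≠ 0 := by positivity
  have : (2 * (b : ℝ) + 1 + 1) ≠ 0 := by positivity
  simp only [q, show 2 * (b + 1) = 2 * b + 1 + 1 by omega, Nat.factorial_succ (2 * b + 1),
    Nat.add_sub_cancel, id]
  push_cast
  field_simp

/-- The moments `K b n = ∫_0^{π/2} p_b u_n`; up to the factor `4 ^ b * 2 / π` these are the sums
`∑_{n < k₁ < ⋯ < k_b} 1 / (k₁² ⋯ k_b²)`. -/
noncomputable def K (b n : ℕ) : ℝ := ∫ x in (0 : ℝ)..(π / 2), p b x * u n x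

lemma K_nonneg (b n : ℕ) : 0 ≤ K b n :=
  intervalIntegral.integral_nonneg (by positivity) fun x _ =>
    mul_nonneg (p_nonneg b x) (u_nonneg n x)

lemma intervalIntegrable_p_u (b n : ℕ) :
    IntervalIntegrable (fun x => p b x * u n x) volume 0 (π / 2) :=
  Continuous.intervalIntegrable (by fun_prop) _ _

lemma K_zero (n : ℕ) : K 0 n = π / 2 := by
  induction n with
  | zero => simp [K, p, u, W_zero]
  | succ n ih =>
    have hg := green (f := p 0) (f1 := fun _ => 0) (f2 := fun _ => 0)
      (fun y => by
        simpa [show p 0 = fun _ => 1 by funext x; simp [p]] using hasDerivAt_const y (1 : ℝ))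
      (fun y => hasDerivAt_const _ _) continuous_const n (π / 2)
    simp only [mul_sub] at hg
    rw [intervalIntegral.integral_sub (intervalIntegrable_p_u _ _) (intervalIntegrable_p_u _ _)]
      at hg
    simp only [cos_pi_div_two, zero_mul, mul_zero, zero_div, sub_zero,
      intervalIntegral.integral_zero] at hg
    unfold K at ih ⊢
    linarith

lemma K_sub (b n : ℕ) : K (b + 1) n - K (b + 1) (n + 1) = K b (n + 1) / 4 / ((n : ℝ) + 1) ^ 2 := by
  have hg := green (f := p (b + 1)) (f1 := fun x => -q b x) (f2 := p b) (hasDerivAt_p b)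
    (fun x => (hasDerivAt_q b x).neg.congr_deriv (neg_neg _)) (continuous_p b) n (π / 2)
  simp only [mul_sub] at hg
  rw [intervalIntegral.integral_sub (intervalIntegrable_p_u _ _) (intervalIntegrable_p_u _ _)]
    at hg
  have hq : q b (π / 2) = 0 := by simp [q]
  simp only [cos_pi_div_two, zero_mul, mul_zero, zero_div, sub_zero, hq, neg_zero] at hg
  unfold K
  rw [div_div]
  linarith

/-- By Jordan's inequality `p (b+1)` is at most a multiple of `cos²`, whose moment is `O(1/n)`. -/
lemma tendsto_K (b : ℕ) : Filter.Tendsto (K (b + 1)) Filter.atTop (nhds 0) := by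
  have hbound : ∀ n, K (b + 1) n ≤
      (π / 2) ^ (2 * b + 2) * (π / 4) * (1 / ((n : ℝ) + 1)) := by
    intro n
    have hW := (W_pos n).ne'
    have h1 : (∫ x in (0 : ℝ)..(π / 2), cos x ^ 2 * u n x) = (π / 4) * (1 / ((n : ℝ) + 1)) := by
      have e : ∀ x, cos x ^ 2 * u n x =
          p 0 x * u n x - (2 * n + 1) / (2 * n + 2) * (p 0 x * u (n + 1) x) := by
        intro x
        have : (2 * (n : ℝ) + 1) ≠ 0 := by positivity
        rw [cos_sq']
        simp only [p, u, W_succ, mul_add, pow_add]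
        field_simp
        simp
      simp only [e]
      rw [intervalIntegral.integral_sub (intervalIntegrable_p_u _ _)
        ((intervalIntegrable_p_u _ _).const_mul _), intervalIntegral.integral_const_mul]
      have k1 := K_zero n
      have k2 := K_zero (n + 1)
      unfold K at k1 k2
      rw [k1, k2]
      field_simp
      ring
    rw [mul_assoc, ← h1, ← intervalIntegral.integral_const_mul]
    refine intervalIntegral.integral_mono_on (by positivity) (intervalIntegrable_p_u _ _)
        (Continuous.intervalIntegrable (by fun_prop) _ _) fun x hx => ?_
    rw [← mul_assoc]
    refine mul_le_mul_of_nonneg_right ?_ (u_nonneg n x)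
    have hx0 : 0 ≤ π / 2 - x := by linarith [hx.2]
    have hj := mul_le_sin hx0 (by linarith [hx.1])
    rw [sin_pi_div_two_sub] at hj
    have hj' : π / 2 - x ≤ π / 2 * cos x := by
      calc π / 2 - x = π / 2 * (2 / π * (π / 2 - x)) := by field_simp
        _ ≤ _ := by gcongr
    calc p (b + 1) x ≤ (π / 2 - x) ^ (2 * (b + 1)) :=
          div_le_self (by positivity) (by exact_mod_cast Nat.factorial_pos _)
      _ = (π / 2 - x) ^ (2 * b) * (π / 2 - x) ^ 2 := by ring
      _ ≤ (π / 2) ^ (2 * b) * (π / 2 * cos x) ^ 2 := by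
          gcongr
          linarith [hx.1]
      _ = _ := by ring
  refine squeeze_zero (K_nonneg _) hbound ?_
  simpa using (tendsto_one_div_add_atTop_nhds_zero_nat (𝕜 := ℝ)).const_mul
    ((π / 2) ^ (2 * b + 2) * (π / 4))

/-- The tail sums `∑_{n < k₁ < ⋯ < k_b} 1 / (k₁² ⋯ k_b²)` are moments of powers of the sine. -/
lemma iterate_one (b : ℕ) :
    (tailSum 2)^[b] (fun _ => 1) = fun n => ENNReal.ofReal (4 ^ b * (2 / π) * K b n) := by
  induction b with
  | zero =>
    funext n
    rw [K_zero]
    have : (4 : ℝ) ^ 0 * (2 / π) * (π / 2) = 1 := by field_simp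
    rw [this]
    simp
  | succ b ih =>
    rw [Function.iterate_succ_apply', ih]
    funext n
    refine ofReal_eq_tailSum (v := fun n => 4 ^ (b + 1) * (2 / π) * K (b + 1) n)
      (fun m => mul_nonneg (by positivity) (K_nonneg b m)) (fun m => ?_) ?_ n
    · rw [← mul_sub, K_sub]
      ring
    · simpa using (tendsto_K b).const_mul (4 ^ (b + 1) * (2 / π))

/-- Integration by parts, using `cot x * sin x ^ (2n) = (sin x ^ (2n) / (2n))'`. The exponent is
positive, which removes the pole of `cot` at `0`. -/
lemma lintegral_q_cot (b n : ℕ) :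
    ∫⁻ x in Set.Ioo 0 (π / 2), ENNReal.ofReal (4 ^ b * (4 / π) * (q b x * cot x)) *
        ENNReal.ofReal (u (n + 1) x) =
      ENNReal.ofReal (1 / ((n + 1 : ℕ) : ℝ)) *
        ENNReal.ofReal (4 ^ b * (2 / π) * K b (n + 1)) := by
  have hW := (W_pos (n + 1)).ne'
  have hc : Continuous fun x => q b x * (sin x ^ (2 * n + 1) * cos x / W (n + 1)) := by fun_prop
  have hI : (∫ x in (0 : ℝ)..(π / 2), q b x * (sin x ^ (2 * n + 1) * cos x / W (n + 1))) =
      K b (n + 1) / (2 * ((n : ℝ) + 1)) := by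
    have hd : ∀ x ∈ Set.uIcc 0 (π / 2), HasDerivAt
        (fun x => q b x * (u (n + 1) x / (2 * ((n : ℝ) + 1))))
        (q b x * (sin x ^ (2 * n + 1) * cos x / W (n + 1)) -
          p b x * u (n + 1) x / (2 * ((n : ℝ) + 1))) x := by
      intro x _
      refine ((hasDerivAt_q b x).mul ((((hasDerivAt_sin x).pow (2 * (n + 1))).div_const
        (W (n + 1))).div_const (2 * ((n : ℝ) + 1)))).congr_deriv ?_
      simp only [u, Pi.pow_apply, show 2 * (n + 1) - 1 = 2 * n + 1 by omega]
      have : ((n : ℝ) + 1) ≠ 0 := by positivity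
      push_cast
      field_simp
      ring
    have hi1 : IntervalIntegrable
        (fun x => q b x * (sin x ^ (2 * n + 1) * cos x / W (n + 1))) volume 0 (π / 2) :=
      hc.intervalIntegrable _ _
    have hi2 := (intervalIntegrable_p_u b (n + 1)).div_const (2 * ((n : ℝ) + 1))
    have h := intervalIntegral.integral_eq_sub_of_hasDerivAt hd (hi1.sub hi2)
    rw [intervalIntegral.integral_sub hi1 hi2, intervalIntegral.integral_div] at h
    have hq : q b (π / 2) = 0 := by simp [q]
    have hu : u (n + 1) 0 = 0 := by simp [u]
    rw [hq, hu, zero_mul, zero_div, mul_zero, sub_zero] at h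
    unfold K
    linarith
  have hR : 1 / ((n + 1 : ℕ) : ℝ) * (4 ^ b * (2 / π) * K b (n + 1)) =
      ∫ x in Set.Ioo 0 (π / 2),
        4 ^ b * (4 / π) * (q b x * (sin x ^ (2 * n + 1) * cos x / W (n + 1))) := by
    rw [← integral_Ioc_eq_integral_Ioo, ← intervalIntegral.integral_of_le (by positivity),
      intervalIntegral.integral_const_mul, hI]
    push_cast
    field_simp
    ring
  have hpt : ∀ x ∈ Set.Ioo 0 (π / 2), 0 < sin x ∧ 0 < cos x := fun x hx =>
    ⟨sin_pos_of_pos_of_lt_pi hx.1 (by linarith [hx.2, pi_pos]),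
      cos_pos_of_mem_Ioo ⟨by linarith [hx.1, pi_pos], hx.2⟩⟩
  rw [← ENNReal.ofReal_mul (by positivity), hR, ofReal_integral_eq_lintegral_ofReal]
  · refine setLIntegral_congr_fun measurableSet_Ioo fun x hx => ?_
    obtain ⟨hs, hcos⟩ := hpt x hx
    rw [← ENNReal.ofReal_mul]
    · congr 1
      rw [cot_eq_cos_div_sin, u]
      field_simp
      ring
    · have := q_nonneg b hx.2.le
      rw [cot_eq_cos_div_sin]
      positivity
  · exact (((continuous_const.mul hc).intervalIntegrable 0 (π / 2)).1).mono_set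
      Set.Ioo_subset_Ioc_self
  · refine (ae_restrict_iff' measurableSet_Ioo).2 (Filter.Eventually.of_forall fun x hx => ?_)
    obtain ⟨hs, hcos⟩ := hpt x hx
    have := q_nonneg b hx.2.le
    have := W_pos (n + 1)
    simp only [Pi.zero_apply]
    positivity

/-- Iterating `tailSum` at least once only sees the values at positive indices. -/
lemma iterate_congr {φ ψ : ℕ → ℝ≥0∞} (h : ∀ m, φ (m + 1) = ψ (m + 1)) (a : ℕ) :
    (tailSum 2)^[a + 1] φ = (tailSum 2)^[a + 1] ψ := by
  rw [Function.iterate_succ_apply, Function.iterate_succ_apply]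
  congr 1
  funext n
  simp only [tailSum, h]

end HIntegral

/-- Lai–Lupu–Orr integral expression for `H(a,b)`. -/
theorem H_integral_expression (a b : ℕ) :
    H a b = (π ^ (2 * b) * 2 ^ (2 * a + 3) /
        ((Nat.factorial (2 * a + 2) : ℝ) * (Nat.factorial (2 * b + 1) : ℝ))) *
      ∫ x in (0 : ℝ)..(π / 2), x ^ (2 * a + 2) * (1 - (2 / π) * x) ^ (2 * b + 1) * Real.cot x := by
  have hcm : Measurable Real.cot := by
    simp only [funext Real.cot_eq_cos_div_sin]
    fun_prop
  have hwm : Measurable fun x => 4 ^ b * (4 / π) * (HIntegral.q b x * Real.cot x) := by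
    have := (HIntegral.continuous_q b).measurable
    fun_prop
  rw [HIntegral.H_eq_toReal, HIntegral.iterate_one,
    HIntegral.iterate_congr (ψ := fun m => ∫⁻ x in Set.Ioo 0 (π / 2),
      ENNReal.ofReal (4 ^ b * (4 / π) * (HIntegral.q b x * Real.cot x)) *
        ENNReal.ofReal (HIntegral.u m x)) (fun m => (HIntegral.lintegral_q_cot b m).symm),
    ← HIntegral.lintegral_iterate HIntegral.measurable_ofReal_u hwm.ennreal_ofReal,
    intervalIntegral.integral_of_le (by positivity), integral_Ioc_eq_integral_Ioo,
    ← integral_const_mul, integral_eq_lintegral_of_nonneg_ae]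
  · congr 1
    refine setLIntegral_congr_fun measurableSet_Ioo fun x hx => ?_
    rw [HIntegral.iterate_u hx.1.le hx.2, ← ENNReal.ofReal_mul']
    · congr 1
      have e : π / 2 - x = π / 2 * (1 - 2 / π * x) := by field_simp
      have e4 : (4 : ℝ) ^ b = 2 ^ (2 * b) := by rw [pow_mul]; norm_num
      rw [HIntegral.q, e, e4, show 2 * (a + 1) = 2 * a + 2 by ring, mul_pow, mul_pow, div_pow]
      field_simp
      ring
    · have := hx.1
      positivity
  · refine (ae_restrict_iff' measurableSet_Ioo).2 (Filter.Eventually.of_forall fun x hx => ?_)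
    have hs : 0 < sin x := sin_pos_of_pos_of_lt_pi hx.1 (by linarith [hx.2, pi_pos])
    have hc : 0 < cos x := cos_pos_of_mem_Ioo ⟨by linarith [hx.1, pi_pos], hx.2⟩
    have h1 : 0 ≤ 1 - 2 / π * x := by
      have e : 1 - 2 / π * x = 2 / π * (π / 2 - x) := by field_simp
      rw [e]
      exact mul_nonneg (by positivity) (by linarith [hx.2])
    have h0 := hx.1
    simp only [Pi.zero_apply]
    rw [Real.cot_eq_cos_div_sin]
    positivity
  · refine Measurable.aestronglyMeasurable ?_
    fun_prop
end

section
/- For all nonnegative integers a and b, the multiple t-value T(a,b) = t({2}^a, 3, {2}^b) admits the integral expression T(a,b) = (π^{2b+1} / (2^{2b+1} (2a+1)! (2b+1)!)) · ∫_0^{π/2} x^{2a+1} (1 - (2/π)x)^{2b+1} cot(x) dx. -/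
/-!
Write `A_n = ∑_{k_1 < ⋯ < k_a < n} ∏ (2k_i+1)⁻²` and `B_n = ∑_{n < k_1 < ⋯ < k_b} ∏ (2k_i+1)⁻²`.
Splitting by the variable `n` with exponent `3` gives `T(a,b) = ∑ₙ A_n (2n+1)⁻³ B_n`
(`tailSum_replicate_append`). Both factors come out of the differential equation
`(sin^m)'' = m(m-1) sin^{m-2} - m² sin^m`.

* With `c_n = binom(2n,n) / (4^n (2n+1))` one has, for `0 ≤ x < π/2`,
  `x^{2a+1} / (2a+1)! = ∑ₙ A_n c_n sin^{2n+1} x` (`tsum_headSum_mul_S`). For `a = 0` this is the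
  arcsine series with an explicit remainder, and `a` is raised by integrating twice.
* With `W n b = ∫₀^{π/2} sin^{2n+1} y (π/2 - y)^{2b} / (2b)! dy`, two integrations by parts show
  that `W n b / W n 0` satisfies the recursion of `B_n`, and it has the same limit; hence
  `W n b = W n 0 · B_n` (`tailSum_replicate_two`).

The integral in question is, up to the constant, that of
`x^{2a+1} / (2a+1)! · (π/2 - x)^{2b+1} / (2b+1)! · cot x`. Expanding the first factor and integrating
`sin^{2n} x cos x · (π/2 - x)^{2b+1} / (2b+1)!` by parts, which gives `W n b / (2n+1)`, turns it into
`∑ₙ A_n c_n W n b / (2n+1)`, and `c_n W n 0 = (2n+1)⁻²` by Wallis. All sums are taken in `ℝ≥0∞`,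
so exchanging sums and integrals needs no convergence argument.
-/


open Real Finset

open Filter Topology MeasureTheory
open scoped ENNReal

/-! ### Splitting the multiple sum -/

/-- The weight `1 / (2n+1)^s`, in `ℝ≥0∞` so that sums may be rearranged freely. -/
noncomputable def wt (s n : ℕ) : ℝ≥0∞ := ENNReal.ofReal (1 / ((2 * n + 1 : ℕ) : ℝ) ^ s)

/-- The multiple `t`-sum of index `l` over `n ≤ f 0 < f 1 < ⋯` (zero-based summation variables,
as in `mtv`), defined by splitting off the smallest variable. -/
noncomputable def tailSum : List ℕ → ℕ → ℝ≥0∞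
  | [], _ => 1
  | s :: l, n => ∑' j, wt s (n + j) * tailSum l (n + j + 1)

/-- The truncated sum `∑_{f 0 < ⋯ < f (a-1) < n} ∏ 1 / (2 f i + 1)^2`, defined by splitting off the
largest variable. -/
noncomputable def headSum : ℕ → ℕ → ℝ≥0∞
  | 0, _ => 1
  | a + 1, n => ∑ k ∈ range n, headSum a k * wt 2 k

lemma tsum_ite_le (g : ℕ → ℝ≥0∞) (n : ℕ) :
    ∑' k, (if n ≤ k then g k else 0) = ∑' j, g (n + j) := by
  have h := (add_right_injective n).tsum_eq (f := fun k => if n ≤ k then g k else 0) (by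
    intro k hk
    by_cases h : n ≤ k
    · exact ⟨k - n, by simp; omega⟩
    · simp [h] at hk)
  rw [← h]
  simp

/-- Exchange of the order of summation in `∑_{k < n}`: the largest variable of `headSum` moves
to the outside. Both the combinatorial splitting and the expansion of `x^(2a+1)` rest on it. -/
lemma tsum_headSum_succ_mul (a : ℕ) (G : ℕ → ℝ≥0∞) :
    ∑' n, headSum (a + 1) n * G n = ∑' k, headSum a k * wt 2 k * ∑' j, G (k + 1 + j) := by
  have h1 : ∀ n, headSum (a + 1) n * G n
      = ∑' k, if k + 1 ≤ n then headSum a k * wt 2 k * G n else 0 := by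
    intro n
    rw [headSum, Finset.sum_mul, tsum_eq_sum (s := range n)]
    · refine Finset.sum_congr rfl fun k hk => ?_
      rw [if_pos (by simpa using hk)]
    · intro k hk
      rw [if_neg (by simpa using hk)]
  simp_rw [h1]
  rw [ENNReal.tsum_comm]
  refine tsum_congr fun k => ?_
  rw [tsum_ite_le (fun n => headSum a k * wt 2 k * G n), ENNReal.tsum_mul_left]

/-- A multiple sum of index `({2}^a, s, l)` organised by the value `n` of the variable that
carries the exponent `s`. -/
lemma tailSum_replicate_append (a s : ℕ) (l : List ℕ) :
    tailSum (List.replicate a 2 ++ s :: l) 0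
      = ∑' n, headSum a n * (wt s n * tailSum l (n + 1)) := by
  induction a generalizing s l with
  | zero => simp [tailSum, headSum]
  | succ a ih =>
    rw [List.replicate_succ', List.append_assoc, List.singleton_append, ih,
      tsum_headSum_succ_mul]
    refine tsum_congr fun n => ?_
    rw [tailSum, mul_assoc]

open Classical in
/-- `tailSum` as a sum over all strictly increasing functions bounded below by `n`, written
with an indicator so that `Fin.consEquiv` can split off the first variable. -/
lemma tsum_strictMono (s : List ℕ) (n : ℕ) :
    ∑' f : Fin s.length → ℕ, (if StrictMono f ∧ ∀ i, n ≤ f i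
      then ∏ i, wt (s.get i) (f i) else 0) = tailSum s n := by
  induction s generalizing n with
  | nil =>
    rw [tsum_eq_single (fun i => i.elim0)]
    · have : StrictMono (fun i : Fin ([] : List ℕ).length => (i.elim0 : ℕ)) :=
        fun i => i.elim0
      rw [if_pos ⟨this, fun i => i.elim0⟩]
      simp [tailSum]
    · intro f hf
      exact absurd (funext fun i => i.elim0) hf
  | cons s l ih =>
    refine ((Fin.consEquiv (fun _ : Fin (l.length + 1) => ℕ)).tsum_eq _).symm.trans ?_
    rw [ENNReal.tsum_prod', tailSum, ← tsum_ite_le (fun k => wt s k * tailSum l (k + 1))]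
    refine tsum_congr fun k => ?_
    rw [← ih, ← ENNReal.tsum_mul_left]
    split_ifs with hk
    · refine tsum_congr fun f => ?_
      have hiff : (StrictMono (Fin.cons k f : Fin (l.length + 1) → ℕ) ∧
          ∀ i, n ≤ (Fin.cons k f : Fin (l.length + 1) → ℕ) i)
          ↔ (StrictMono f ∧ ∀ i, k + 1 ≤ f i) := by
        constructor
        · rintro ⟨h, -⟩
          refine ⟨fun i j hij => ?_, fun i => ?_⟩
          · simpa using h (Fin.succ_lt_succ_iff.2 hij)
          · simpa using h (Fin.succ_pos i)
        · rintro ⟨h, h'⟩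
          refine ⟨fun i j hij => ?_, fun i => ?_⟩
          · induction j using Fin.cases with
            | zero => exact absurd hij (Fin.not_lt_zero i)
            | succ j =>
              induction i using Fin.cases with
              | zero => simpa using h' j
              | succ i => simpa using h (Fin.succ_lt_succ_iff.1 hij)
          · induction i using Fin.cases with
            | zero => simpa using hk
            | succ i => have := h' i; simp; omega
      have hprod : ∏ i, wt ((s :: l).get i) ((Fin.cons k f : Fin (l.length + 1) → ℕ) i)
          = wt s k * ∏ i, wt (l.get i) (f i) :=
        (Fin.prod_univ_succ (n := l.length) _).trans (by simp)
      change (if StrictMono (Fin.cons k f : Fin (l.length + 1) → ℕ) ∧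
          ∀ i, n ≤ (Fin.cons k f : Fin (l.length + 1) → ℕ) i
          then ∏ i, wt ((s :: l).get i) ((Fin.cons k f : Fin (l.length + 1) → ℕ) i) else 0) = _
      rw [hprod, mul_ite, mul_zero]
      exact if_congr hiff rfl rfl
    · rw [ENNReal.tsum_eq_zero]
      intro f
      refine if_neg fun h => hk ?_
      simpa using h.2 0

/-- No convergence is needed: a real `tsum` of nonnegative terms is `0` if it diverges, and so is
`toReal ⊤`. -/
lemma mtv_eq_toReal (s : List ℕ) : mtv s = (tailSum s 0).toReal := by
  classical
  rw [← tsum_strictMono, mtv]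
  have h : ∑' f : Fin s.length → ℕ, (if StrictMono f ∧ ∀ i, 0 ≤ f i
      then ∏ i, wt (s.get i) (f i) else 0)
      = ∑' f : {f : Fin s.length → ℕ // StrictMono f}, ∏ i, wt (s.get i) (f.1 i) := by
    rw [show (∑' f : {f : Fin s.length → ℕ // StrictMono f}, ∏ i, wt (s.get i) (f.1 i)) = _ from
      tsum_subtype {f : Fin s.length → ℕ | StrictMono f} fun f => ∏ i, wt (s.get i) (f i)]
    refine tsum_congr fun f => ?_
    simp [Set.indicator_apply]
  rw [h, ENNReal.tsum_toReal_eq]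
  · refine tsum_congr fun f => ?_
    rw [ENNReal.toReal_prod]
    refine Finset.prod_congr rfl fun i _ => ?_
    rw [wt, ENNReal.toReal_ofReal (by positivity)]
  · exact fun f => ENNReal.prod_ne_top fun i _ => ENNReal.ofReal_ne_top

/-! ### Weighted Wallis integrals -/

/-- The weighted Wallis integral `∫₀^{π/2} sin^{2n+1} y · (π/2 - y)^{2b} / (2b)! dy`. -/
noncomputable def W (n b : ℕ) : ℝ :=
  ∫ y in (0 : ℝ)..(π / 2), sin y ^ (2 * n + 1) * ((π / 2 - y) ^ (2 * b) / (2 * b).factorial)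

lemma hasDerivAt_taylor (x y : ℝ) (k : ℕ) :
    HasDerivAt (fun y => (x - y) ^ (k + 1) / ((k + 1).factorial : ℝ))
      (-((x - y) ^ k / (k.factorial : ℝ))) y := by
  have h := ((((hasDerivAt_id' y).const_sub x).fun_pow (k + 1)).div_const ((k + 1).factorial : ℝ))
  refine h.congr_deriv ?_
  have : (k.factorial : ℝ) ≠ 0 := by positivity
  rw [Nat.factorial_succ]
  push_cast
  simp
  field_simp

lemma hasDerivAt_sin_pow (m : ℕ) (y : ℝ) :
    HasDerivAt (fun y => sin y ^ (m + 1)) ((m + 1) * sin y ^ m * cos y) y :=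
  ((hasDerivAt_sin y).fun_pow (m + 1)).congr_deriv (by simp)

lemma hasDerivAt_sin_pow_mul_cos (m : ℕ) (c : ℝ) (hc : c = m + 2) (y : ℝ) :
    HasDerivAt (fun y => c * sin y ^ (m + 1) * cos y)
      (c * (c - 1) * sin y ^ m - c ^ 2 * sin y ^ (m + 2)) y := by
  refine (((hasDerivAt_sin_pow m y).const_mul c).fun_mul (hasDerivAt_cos y)).congr_deriv ?_
  subst hc
  linear_combination ((m : ℝ) + 2) * (m + 1) * sin y ^ m * cos_sq' y

/-- Two integrations by parts, using `(sin^m)'' = m(m-1) sin^{m-2} - m² sin^m`. -/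
lemma W_rec (n b : ℕ) :
    W (n + 1) b = (2 * n + 3) * (2 * n + 2) * W n (b + 1) - (2 * n + 3) ^ 2 * W (n + 1) (b + 1) := by
  have key : ∀ y ∈ Set.uIcc 0 (π / 2), HasDerivAt
      (fun y => ((2 * n + 3) * sin y ^ (2 * n + 2) * cos y)
          * ((π / 2 - y) ^ (2 * b + 2) / (2 * b + 2).factorial)
        + sin y ^ (2 * n + 3) * ((π / 2 - y) ^ (2 * b + 1) / (2 * b + 1).factorial))
      ((2 * n + 3) * (2 * n + 2) * (sin y ^ (2 * n + 1) * ((π / 2 - y) ^ (2 * b + 2) / (2 * b + 2).factorial))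
        - (2 * n + 3) ^ 2 * (sin y ^ (2 * n + 3) * ((π / 2 - y) ^ (2 * b + 2) / (2 * b + 2).factorial))
        - sin y ^ (2 * n + 3) * ((π / 2 - y) ^ (2 * b) / (2 * b).factorial)) y := by
    intro y _
    have h1 := hasDerivAt_sin_pow_mul_cos (2 * n + 1) (2 * n + 3) (by push_cast; ring) y
    have h2 := hasDerivAt_sin_pow (2 * n + 2) y
    have h3 := hasDerivAt_taylor (π / 2) y (2 * b + 1)
    have h4 := hasDerivAt_taylor (π / 2) y (2 * b)
    refine ((h1.fun_mul h3).fun_add (h2.fun_mul h4)).congr_deriv ?_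
    push_cast
    ring
  have hint := intervalIntegral.integral_eq_sub_of_hasDerivAt key
    (Continuous.intervalIntegrable (by fun_prop) _ _)
  rw [intervalIntegral.integral_sub (Continuous.intervalIntegrable (by fun_prop) _ _)
      (Continuous.intervalIntegrable (by fun_prop) _ _),
    intervalIntegral.integral_sub (Continuous.intervalIntegrable (by fun_prop) _ _)
      (Continuous.intervalIntegrable (by fun_prop) _ _), intervalIntegral.integral_const_mul,
    intervalIntegral.integral_const_mul] at hint
  simp at hint
  simp only [W, show 2 * (n + 1) + 1 = 2 * n + 3 by ring, show 2 * (b + 1) = 2 * b + 2 by ring]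
  linarith

lemma W_nonneg (n b : ℕ) : 0 ≤ W n b := by
  refine intervalIntegral.integral_nonneg (by positivity) fun y hy => ?_
  have h1 := sin_nonneg_of_nonneg_of_le_pi hy.1 (by linarith [hy.2, pi_pos])
  have h2 : 0 ≤ π / 2 - y := by linarith [hy.2]
  positivity

lemma W_zero_zero : W 0 0 = 1 := by simp [W]

lemma W_succ_zero (n : ℕ) : (2 * n + 3) * W (n + 1) 0 = (2 * n + 2) * W n 0 := by
  have key : ∀ y ∈ Set.uIcc 0 (π / 2), HasDerivAt
      (fun y => (2 * n + 3) * sin y ^ (2 * n + 1 + 1) * cos y)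
      ((2 * n + 3) * (2 * n + 3 - 1) * sin y ^ (2 * n + 1)
        - (2 * n + 3) ^ 2 * sin y ^ (2 * n + 1 + 2)) y :=
    fun y _ => hasDerivAt_sin_pow_mul_cos (2 * n + 1) (2 * n + 3) (by push_cast; ring) y
  have hint := intervalIntegral.integral_eq_sub_of_hasDerivAt key
    (Continuous.intervalIntegrable (by fun_prop) _ _)
  rw [intervalIntegral.integral_sub (Continuous.intervalIntegrable (by fun_prop) _ _)
      (Continuous.intervalIntegrable (by fun_prop) _ _), intervalIntegral.integral_const_mul,
    intervalIntegral.integral_const_mul] at hint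
  simp only [W, show 2 * (n + 1) + 1 = 2 * n + 1 + 2 by ring]
  simp at hint ⊢
  have h3 : (2 * (n : ℝ) + 3) ≠ 0 := by positivity
  apply mul_left_cancel₀ h3
  linear_combination -hint

lemma W_pos (n : ℕ) : 0 < W n 0 := by
  induction n with
  | zero => simp [W_zero_zero]
  | succ n ih =>
    have h := W_succ_zero n
    have : 0 < (2 * (n : ℝ) + 3) * W (n + 1) 0 := by rw [h]; positivity
    exact pos_of_mul_pos_right this (by positivity)

/-- Bounds `W n (b+1)` through `π/2 - y ≤ (π/2) cos y` (Jordan's inequality) and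
`∫ sin^{2n+1} cos² = W n 0 - W (n+1) 0`; it yields `W n (b+1) / W n 0 → 0`. -/
lemma W_succ_le (n b : ℕ) :
    W n (b + 1) ≤ (π / 2) ^ (2 * b + 2) * (W n 0 / (2 * n + 3)) := by
  have h : W n 0 / (2 * n + 3) = W n 0 - W (n + 1) 0 := by
    have := W_succ_zero n
    field_simp
    linarith
  rw [h]
  simp only [W]
  rw [← intervalIntegral.integral_sub (Continuous.intervalIntegrable (by fun_prop) _ _)
      (Continuous.intervalIntegrable (by fun_prop) _ _), ← intervalIntegral.integral_const_mul]
  refine intervalIntegral.integral_mono_on (by positivity)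
    (Continuous.intervalIntegrable (by fun_prop) _ _)
    (Continuous.intervalIntegrable (by fun_prop) _ _) fun y hy => ?_
  have h1 := sin_nonneg_of_nonneg_of_le_pi hy.1 (by linarith [hy.2, pi_pos])
  have h2 : 0 ≤ π / 2 - y := by linarith [hy.2]
  have h3 : π / 2 - y ≤ π / 2 * cos y := by
    have := mul_le_sin h2 (by linarith [hy.1])
    rw [sin_pi_div_two_sub] at this
    calc π / 2 - y = π / 2 * (2 / π * (π / 2 - y)) := by field_simp
      _ ≤ _ := by gcongr
  have h4 : 0 ≤ cos y := by
    by_contra h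
    nlinarith [pi_pos]
  have h5 : (π / 2 - y) ^ (2 * (b + 1)) / ((2 * (b + 1)).factorial : ℝ)
      ≤ (π / 2) ^ (2 * b + 2) * cos y ^ 2 := by
    calc _ ≤ (π / 2 - y) ^ (2 * (b + 1)) :=
          div_le_self (by positivity) (by exact_mod_cast Nat.one_le_of_lt (Nat.factorial_pos _))
      _ ≤ (π / 2 * cos y) ^ (2 * (b + 1)) := by gcongr
      _ = (π / 2) ^ (2 * b + 2) * cos y ^ (2 * b + 2) := by rw [mul_pow]; ring
      _ ≤ _ := by
          gcongr ?_ * ?_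
          exact pow_le_pow_of_le_one h4 (cos_le_one y) (by omega)
  calc _ ≤ sin y ^ (2 * n + 1) * ((π / 2) ^ (2 * b + 2) * cos y ^ 2) := by gcongr
    _ = _ := by
      rw [cos_sq']
      simp
      ring

lemma ofReal_tsum_telescope (u : ℕ → ℝ) (hu : Antitone u) (h0 : Tendsto u atTop (𝓝 0)) :
    ∑' j, ENNReal.ofReal (u j - u (j + 1)) = ENNReal.ofReal (u 0) := by
  have hs : HasSum (fun j => u j - u (j + 1)) (u 0) := by
    rw [hasSum_iff_tendsto_nat_of_nonneg fun j => sub_nonneg.2 (hu (Nat.le_succ j))]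
    simp_rw [Finset.sum_range_sub']
    simpa using h0.const_sub (u 0)
  rw [← hs.tsum_eq, ENNReal.ofReal_tsum_of_nonneg (fun j => sub_nonneg.2 (hu (Nat.le_succ j)))
    hs.summable]

/-- The ratio `W n b / W n 0` is the multiple sum `∑_{n < k_1 < ⋯ < k_b} ∏ 1 / (2k_i+1)^2`:
by `W_rec` its differences in `n` telescope, and it tends to `0` for `b ≥ 1`. -/
lemma tailSum_replicate_two (b n : ℕ) :
    tailSum (List.replicate b 2) (n + 1) = ENNReal.ofReal (W n b / W n 0) := by
  induction b generalizing n with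
  | zero => simp [tailSum, (W_pos n).ne']
  | succ b ih =>
    have hrec : ∀ k, W k (b + 1) / W k 0 - W (k + 1) (b + 1) / W (k + 1) 0
        = 1 / ((2 * (k + 1) + 1 : ℕ) : ℝ) ^ 2 * (W (k + 1) b / W (k + 1) 0) := by
      intro k
      have h1 := W_rec k b
      have h2 := W_succ_zero k
      have h3 := W_pos k
      have h4 := W_pos (k + 1)
      have h5 : W (k + 1) 0 = (2 * k + 2) * W k 0 / (2 * k + 3) := by field_simp; linarith
      rw [h1, h5]
      push_cast
      field_simp
      ring
    have hnn : ∀ k, 0 ≤ 1 / ((2 * (k + 1) + 1 : ℕ) : ℝ) ^ 2 * (W (k + 1) b / W (k + 1) 0) :=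
      fun k => mul_nonneg (by positivity) (div_nonneg (W_nonneg _ _) (W_nonneg _ _))
    have htel := ofReal_tsum_telescope (fun j => W (n + j) (b + 1) / W (n + j) 0)
      (antitone_nat_of_succ_le fun j => by
        have := hrec (n + j)
        have := hnn (n + j)
        rw [← add_assoc]
        linarith)
      (by
        have hlim : Tendsto (fun j : ℕ => (π / 2) ^ (2 * b + 2) * (1 / ((j : ℝ) + 1))) atTop (𝓝 0) := by
          simpa using tendsto_one_div_add_atTop_nhds_zero_nat.const_mul ((π / 2) ^ (2 * b + 2))
        refine squeeze_zero (fun j => div_nonneg (W_nonneg _ _) (W_nonneg _ _)) (fun j => ?_) hlim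
        rw [div_le_iff₀ (W_pos _)]
        refine (W_succ_le (n + j) b).trans ?_
        rw [mul_assoc, one_div_mul_eq_div]
        have hle : (j : ℝ) + 1 ≤ 2 * ((n + j : ℕ) : ℝ) + 3 := by
          have : (0 : ℝ) ≤ n := by positivity
          have : (0 : ℝ) ≤ j := by positivity
          push_cast
          linarith
        exact mul_le_mul_of_nonneg_left
          (div_le_div_of_nonneg_left (W_nonneg _ _) (by positivity) hle) (by positivity))
    rw [List.replicate_succ, tailSum]
    refine Eq.trans (tsum_congr fun j => ?_) htel
    rw [← add_assoc, hrec, ih, wt, ← ENNReal.ofReal_mul (by positivity), add_right_comm n 1 j]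

/-! ### Powers of `x` in terms of `sin x` -/

/-- The `n`-th term of the arcsine series in the variable `sin x`, so that `∑ S n x = x`. The
coefficient `binom(2n, n) / (4^n (2n+1))` is written as `1 / ((2n+1)² W n 0)`, the form in which
it cancels against the Wallis integral. -/
noncomputable def S (n : ℕ) (x : ℝ) : ℝ := 1 / ((2 * n + 1) ^ 2 * W n 0) * sin x ^ (2 * n + 1)

/-- The remainder `∑_{k > n} S k x`, in the closed form `(2n+1)² ∫₀^x (x - y) S n y dy`. -/
noncomputable def U (n : ℕ) (x : ℝ) : ℝ :=
  1 / W n 0 * ∫ y in (0 : ℝ)..x, (x - y) * sin y ^ (2 * n + 1)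

lemma S_nonneg (n : ℕ) {x : ℝ} (h0 : 0 ≤ x) (h1 : x ≤ π / 2) : 0 ≤ S n x := by
  have := sin_nonneg_of_nonneg_of_le_pi h0 (by linarith [pi_pos])
  have := W_pos n
  unfold S
  positivity

lemma continuous_S (n : ℕ) : Continuous (S n) := by
  unfold S
  fun_prop

lemma S_zero (x : ℝ) : S 0 x = x - U 0 x := by
  have key : ∀ y ∈ Set.uIcc 0 x, HasDerivAt (fun y => (x - y) * cos y + sin y)
      (-((x - y) * sin y)) y := by
    intro y _
    refine ((((hasDerivAt_id' y).const_sub x).fun_mul (hasDerivAt_cos y)).fun_add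
      (hasDerivAt_sin y)).congr_deriv ?_
    ring
  have hint := intervalIntegral.integral_eq_sub_of_hasDerivAt key
    (Continuous.intervalIntegrable (by fun_prop) _ _)
  rw [intervalIntegral.integral_neg] at hint
  simp [S, U, W_zero_zero] at hint ⊢
  linarith

/-- `sin^m x = m(m-1) ∫₀^x (x - y) sin^{m-2} y dy - m² ∫₀^x (x - y) sin^m y dy` at `m = 2n+3`;
the coefficients of `S` are those that make this telescope. -/
lemma S_succ (n : ℕ) (x : ℝ) : S (n + 1) x = U n x - U (n + 1) x := by
  have key : ∀ y ∈ Set.uIcc 0 x, HasDerivAt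
      (fun y => (x - y) * ((2 * n + 3) * sin y ^ (2 * n + 2) * cos y) + sin y ^ (2 * n + 3))
      ((2 * n + 3) * (2 * n + 2) * ((x - y) * sin y ^ (2 * n + 1))
        - (2 * n + 3) ^ 2 * ((x - y) * sin y ^ (2 * n + 3))) y := by
    intro y _
    have h1 := hasDerivAt_sin_pow_mul_cos (2 * n + 1) (2 * n + 3) (by push_cast; ring) y
    have h2 := hasDerivAt_sin_pow (2 * n + 2) y
    refine ((((hasDerivAt_id' y).const_sub x).fun_mul h1).fun_add h2).congr_deriv ?_
    push_cast
    ring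
  have hint := intervalIntegral.integral_eq_sub_of_hasDerivAt key
    (Continuous.intervalIntegrable (by fun_prop) _ _)
  rw [intervalIntegral.integral_sub (Continuous.intervalIntegrable (by fun_prop) _ _)
      (Continuous.intervalIntegrable (by fun_prop) _ _), intervalIntegral.integral_const_mul,
    intervalIntegral.integral_const_mul] at hint
  simp at hint
  have h3 := W_pos n
  have h4 := W_pos (n + 1)
  have h5 : W (n + 1) 0 = (2 * n + 2) * W n 0 / (2 * n + 3) := by
    have := W_succ_zero n
    field_simp
    linarith
  simp only [S, U, show 2 * (n + 1) + 1 = 2 * n + 3 by ring]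
  rw [← hint, h5]
  push_cast
  field_simp
  ring

/-- A crude lower bound on `W n 0`; the linear growth is harmless against `sin x ^ (2n+1)`. -/
lemma one_div_W_le (n : ℕ) : 1 / W n 0 ≤ 2 * n + 1 := by
  rw [div_le_iff₀ (W_pos n)]
  induction n with
  | zero => simp [W_zero_zero]
  | succ n ih =>
    have := W_succ_zero n
    have := W_pos n
    push_cast
    nlinarith

lemma U_nonneg (n : ℕ) {x : ℝ} (h0 : 0 ≤ x) (h1 : x ≤ π / 2) : 0 ≤ U n x := by
  refine mul_nonneg (one_div_nonneg.2 (W_nonneg _ _))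
    (intervalIntegral.integral_nonneg h0 fun y hy => ?_)
  exact mul_nonneg (by linarith [hy.2])
    (pow_nonneg (sin_nonneg_of_nonneg_of_le_pi hy.1 (by linarith [pi_pos, hy.2])) _)

lemma tendsto_U {x : ℝ} (h0 : 0 ≤ x) (h1 : x < π / 2) :
    Tendsto (fun n => U n x) atTop (𝓝 0) := by
  have hs0 := sin_nonneg_of_nonneg_of_le_pi h0 (by linarith [pi_pos])
  have hs1 : sin x < 1 := by
    rw [← sin_pi_div_two]
    exact sin_lt_sin_of_lt_of_le_pi_div_two (by linarith [pi_pos]) le_rfl h1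
  have hsin : ∀ y ∈ Set.Icc 0 x, 0 ≤ sin y ∧ sin y ≤ sin x := fun y hy =>
    ⟨sin_nonneg_of_nonneg_of_le_pi hy.1 (by linarith [pi_pos, hy.2]),
      sin_le_sin_of_le_of_le_pi_div_two (by linarith [pi_pos, hy.1]) h1.le hy.2⟩
  have hlim : Tendsto (fun n : ℕ => ((2 * n + 1 : ℕ) : ℝ) * sin x ^ (2 * n + 1) * (x * x))
      atTop (𝓝 0) := by
    have h2 : Tendsto (fun n : ℕ => 2 * n + 1) atTop atTop :=
      tendsto_atTop_mono (fun n => by simp only [id]; omega) tendsto_id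
    simpa using (((tendsto_self_mul_const_pow_of_lt_one hs0 hs1).comp h2).mul_const (x * x))
  refine squeeze_zero (fun n => ?_) (fun n => ?_) hlim
  · exact U_nonneg n h0 h1.le
  · have hle : ∫ y in (0 : ℝ)..x, (x - y) * sin y ^ (2 * n + 1)
        ≤ ∫ y in (0 : ℝ)..x, x * sin x ^ (2 * n + 1) := by
      refine intervalIntegral.integral_mono_on h0
        (Continuous.intervalIntegrable (by fun_prop) _ _)
        (Continuous.intervalIntegrable (by fun_prop) _ _) fun y hy => ?_
      have := (hsin y hy).1
      exact mul_le_mul (by linarith [hy.1]) (pow_le_pow_left₀ this (hsin y hy).2 _)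
        (by positivity) h0
    rw [intervalIntegral.integral_const, smul_eq_mul, sub_zero] at hle
    calc U n x ≤ (2 * n + 1) * (x * (x * sin x ^ (2 * n + 1))) := by
          refine mul_le_mul (one_div_W_le n) hle ?_ (by positivity)
          refine intervalIntegral.integral_nonneg h0 fun y hy => ?_
          exact mul_nonneg (by linarith [hy.2]) (pow_nonneg (hsin y hy).1 _)
      _ = _ := by push_cast; ring

lemma tsum_S_tail (n : ℕ) {x : ℝ} (h0 : 0 ≤ x) (h1 : x < π / 2) :
    ∑' j, ENNReal.ofReal (S (n + 1 + j) x) = ENNReal.ofReal (U n x) := by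
  have h := ofReal_tsum_telescope (fun j => U (n + j) x)
    (antitone_nat_of_succ_le fun j => by
      have h2 := S_succ (n + j) x
      have h3 := S_nonneg (n + j + 1) h0 h1.le
      rw [← add_assoc]
      linarith)
    ((tendsto_add_atTop_iff_nat n).2 (tendsto_U h0 h1) |>.congr fun j => by rw [add_comm])
  rw [add_zero] at h
  rw [← h]
  refine tsum_congr fun j => ?_
  rw [← add_assoc, ← S_succ, add_right_comm]

lemma tsum_S {x : ℝ} (h0 : 0 ≤ x) (h1 : x < π / 2) :
    ∑' n, ENNReal.ofReal (S n x) = ENNReal.ofReal x := by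
  rw [tsum_eq_zero_add' ENNReal.summable]
  have h := tsum_S_tail 0 h0 h1
  simp only [zero_add, add_comm 1] at h
  rw [h, ← ENNReal.ofReal_add (S_nonneg 0 h0 h1.le) (U_nonneg 0 h0 h1.le), S_zero,
    sub_add_cancel]

/-- `ENNReal.ofReal` of an interval integral of a nonnegative continuous function. -/
lemma ofReal_integral_eq {f : ℝ → ℝ} (hf : Continuous f) {x : ℝ} (hx : 0 ≤ x)
    (h : ∀ y ∈ Set.Ioc 0 x, 0 ≤ f y) :
    ENNReal.ofReal (∫ y in (0 : ℝ)..x, f y) = ∫⁻ y in Set.Ioc 0 x, ENNReal.ofReal (f y) := by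
  rw [intervalIntegral.integral_of_le hx, ofReal_integral_eq_lintegral_ofReal]
  · exact (hf.integrableOn_Icc).mono_set Set.Ioc_subset_Icc_self
  · exact (ae_restrict_iff' measurableSet_Ioc).2 (Eventually.of_forall h)

/-- `f ↦ ∫₀^x (x - y) f(y) dy` is the double antiderivative, so it raises `a` by one. -/
lemma integral_taylor (a : ℕ) (x : ℝ) :
    ∫ y in (0 : ℝ)..x, (x - y) * (y ^ (2 * a + 1) / (2 * a + 1).factorial)
      = x ^ (2 * (a + 1) + 1) / (2 * (a + 1) + 1).factorial := by
  have hd : ∀ (k : ℕ) (y : ℝ), HasDerivAt (fun y : ℝ => y ^ (k + 1) / ((k + 1).factorial : ℝ))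
      (y ^ k / (k.factorial : ℝ)) y := by
    intro k y
    refine ((hasDerivAt_pow (k + 1) y).div_const _).congr_deriv ?_
    have : (k.factorial : ℝ) ≠ 0 := by positivity
    rw [Nat.factorial_succ]
    push_cast
    field_simp
  have key : ∀ y ∈ Set.uIcc 0 x, HasDerivAt
      (fun y => (x - y) * (y ^ (2 * a + 2) / (2 * a + 2).factorial)
        + y ^ (2 * a + 3) / (2 * a + 3).factorial)
      ((x - y) * (y ^ (2 * a + 1) / (2 * a + 1).factorial)) y := by
    intro y _
    refine ((((hasDerivAt_id' y).const_sub x).fun_mul (hd (2 * a + 1) y)).fun_add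
      (hd (2 * a + 2) y)).congr_deriv ?_
    ring
  rw [intervalIntegral.integral_eq_sub_of_hasDerivAt key
    (Continuous.intervalIntegrable (by fun_prop) _ _)]
  simp [mul_add]

/-- The expansion of `x^(2a+1) / (2a+1)!` in odd powers of `sin x`. The induction step applies
`∫₀^x (x - y) · dy` termwise, which sends `S n` to `(2n+1)⁻² ∑_{k > n} S k`. -/
lemma tsum_headSum_mul_S (a : ℕ) {x : ℝ} (h0 : 0 ≤ x) (h1 : x < π / 2) :
    ∑' n, headSum a n * ENNReal.ofReal (S n x)
      = ENNReal.ofReal (x ^ (2 * a + 1) / (2 * a + 1).factorial) := by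
  induction a generalizing x with
  | zero => simpa [headSum] using tsum_S h0 h1
  | succ a ih =>
    rw [tsum_headSum_succ_mul, ← integral_taylor, ofReal_integral_eq (by fun_prop) h0]
    · have hsplit : ∀ y ∈ Set.Ioc 0 x,
          ENNReal.ofReal ((x - y) * (y ^ (2 * a + 1) / (2 * a + 1).factorial))
            = ∑' n, headSum a n * ENNReal.ofReal ((x - y) * S n y) := by
        intro y hy
        rw [ENNReal.ofReal_mul (by linarith [hy.2]), ← ih hy.1.le (hy.2.trans_lt h1),
          ← ENNReal.tsum_mul_left]
        refine tsum_congr fun n => ?_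
        rw [ENNReal.ofReal_mul (by linarith [hy.2])]
        ring
      have hm : ∀ n, Measurable fun y => ENNReal.ofReal ((x - y) * S n y) := fun n =>
        (Continuous.measurable (by have := continuous_S n; fun_prop)).ennreal_ofReal
      rw [setLIntegral_congr_fun measurableSet_Ioc hsplit,
        lintegral_tsum fun n => ((hm n).const_mul _).aemeasurable]
      refine tsum_congr fun n => ?_
      rw [lintegral_const_mul _ (hm n), tsum_S_tail n h0 h1, mul_assoc]
      congr 1
      rw [← ofReal_integral_eq (by have := continuous_S n; fun_prop) h0, wt,
        ← ENNReal.ofReal_mul (by positivity)]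
      · congr 1
        have hS : ∀ y, (x - y) * S n y
            = 1 / ((2 * n + 1) ^ 2 * W n 0) * ((x - y) * sin y ^ (2 * n + 1)) := by
          intro y
          rw [S]
          ring
        simp_rw [hS]
        rw [U, intervalIntegral.integral_const_mul, ← mul_assoc]
        push_cast
        have := (W_pos n).ne'
        field_simp
      · intro y hy
        exact mul_nonneg (by linarith [hy.2]) (S_nonneg n hy.1.le (by linarith [hy.2]))
    · intro y hy
      have : 0 ≤ x - y := by linarith [hy.2]
      have := hy.1
      positivity

/-! ### The integral -/

lemma integral_sin_pow_mul_cos (n b : ℕ) :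
    ∫ y in (0 : ℝ)..(π / 2),
        sin y ^ (2 * n) * cos y * ((π / 2 - y) ^ (2 * b + 1) / (2 * b + 1).factorial)
      = W n b / (2 * n + 1) := by
  have key : ∀ y ∈ Set.uIcc 0 (π / 2), HasDerivAt
      (fun y => sin y ^ (2 * n + 1) * ((π / 2 - y) ^ (2 * b + 1) / (2 * b + 1).factorial))
      ((2 * n + 1) * (sin y ^ (2 * n) * cos y
          * ((π / 2 - y) ^ (2 * b + 1) / (2 * b + 1).factorial))
        - sin y ^ (2 * n + 1) * ((π / 2 - y) ^ (2 * b) / (2 * b).factorial)) y := by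
    intro y _
    refine ((hasDerivAt_sin_pow (2 * n) y).fun_mul
      (hasDerivAt_taylor (π / 2) y (2 * b))).congr_deriv ?_
    push_cast
    ring
  have hint := intervalIntegral.integral_eq_sub_of_hasDerivAt key
    (Continuous.intervalIntegrable (by fun_prop) _ _)
  rw [intervalIntegral.integral_sub (Continuous.intervalIntegrable (by fun_prop) _ _)
      (Continuous.intervalIntegrable (by fun_prop) _ _),
    intervalIntegral.integral_const_mul] at hint
  simp at hint
  rw [eq_div_iff (by positivity), W]
  linarith

/-- Integrating the expansion of `x^(2a+1) / (2a+1)!` termwise; the `n`-th term contributes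
`headSum a n · (2n+1)⁻³ · W n b / W n 0`. -/
lemma lintegral_eq_tailSum (a b : ℕ) :
    ∫⁻ x in Set.Ioo 0 (π / 2), ENNReal.ofReal (x ^ (2 * a + 1) / (2 * a + 1).factorial
        * ((π / 2 - x) ^ (2 * b + 1) / (2 * b + 1).factorial * cot x))
      = tailSum (List.replicate a 2 ++ 3 :: List.replicate b 2) 0 := by
  have hsplit : ∀ x ∈ Set.Ioo 0 (π / 2),
      ENNReal.ofReal (x ^ (2 * a + 1) / (2 * a + 1).factorial
        * ((π / 2 - x) ^ (2 * b + 1) / (2 * b + 1).factorial * cot x))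
      = ∑' n, headSum a n * ENNReal.ofReal (1 / ((2 * n + 1) ^ 2 * W n 0) *
          (sin x ^ (2 * n) * cos x * ((π / 2 - x) ^ (2 * b + 1) / (2 * b + 1).factorial))) := by
    intro x hx
    have hx0 := hx.1
    have hs := sin_pos_of_pos_of_lt_pi hx.1 (by linarith [hx.2, pi_pos])
    rw [ENNReal.ofReal_mul (by positivity), ← tsum_headSum_mul_S a hx.1.le hx.2,
      ← ENNReal.tsum_mul_right]
    refine tsum_congr fun n => ?_
    rw [mul_assoc, ← ENNReal.ofReal_mul (S_nonneg n hx.1.le hx.2.le), S, cot_eq_cos_div_sin]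
    congr 2
    rw [pow_succ (sin x)]
    field_simp
  have hm : ∀ n : ℕ, Measurable fun x => ENNReal.ofReal (1 / ((2 * n + 1) ^ 2 * W n 0) *
      (sin x ^ (2 * n) * cos x * ((π / 2 - x) ^ (2 * b + 1) / (2 * b + 1).factorial))) := fun n =>
    (Continuous.measurable (by fun_prop)).ennreal_ofReal
  rw [setLIntegral_congr_fun measurableSet_Ioo hsplit,
    lintegral_tsum fun n => ((hm n).const_mul _).aemeasurable, tailSum_replicate_append]
  refine tsum_congr fun n => ?_
  have hW := W_pos n
  rw [lintegral_const_mul _ (hm n), restrict_Ioo_eq_restrict_Ioc,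
    ← ofReal_integral_eq (by fun_prop) (by positivity), intervalIntegral.integral_const_mul,
    integral_sin_pow_mul_cos, tailSum_replicate_two, wt, ← ENNReal.ofReal_mul (by positivity)]
  · congr 2
    push_cast
    field_simp
  · intro y hy
    have h1 := sin_nonneg_of_nonneg_of_le_pi hy.1.le (by linarith [hy.2, pi_pos])
    have h2 := cos_nonneg_of_neg_pi_div_two_le_of_le (by linarith [hy.1, pi_pos]) hy.2
    have h3 : 0 ≤ π / 2 - y := by linarith [hy.2]
    positivity

/-- Lai–Lupu–Orr integral expression for `T(a,b)`. -/
theorem T_integral_expression (a b : ℕ) :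
    T a b = (π ^ (2 * b + 1) /
        (2 ^ (2 * b + 1) * (Nat.factorial (2 * a + 1) : ℝ) * (Nat.factorial (2 * b + 1) : ℝ))) *
      ∫ x in (0 : ℝ)..(π / 2), x ^ (2 * a + 1) * (1 - (2 / π) * x) ^ (2 * b + 1) * Real.cot x := by
  have hcot : Measurable Real.cot := by
    have : Real.cot = fun x => cos x / sin x := funext cot_eq_cos_div_sin
    rw [this]
    fun_prop
  rw [T, mtv_eq_toReal, ← lintegral_eq_tailSum, ← integral_eq_lintegral_of_nonneg_ae,
    ← integral_Ioc_eq_integral_Ioo, ← intervalIntegral.integral_of_le (by positivity),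
    ← intervalIntegral.integral_const_mul]
  · refine intervalIntegral.integral_congr fun x _ => ?_
    have h : π / 2 - x = π / 2 * (1 - 2 / π * x) := by field_simp
    rw [h, mul_pow, div_pow]
    field_simp
  · refine (ae_restrict_iff' measurableSet_Ioo).2 (Eventually.of_forall fun x hx => ?_)
    have hx0 := hx.1
    have h1 := sin_nonneg_of_nonneg_of_le_pi hx.1.le (by linarith [hx.2, pi_pos])
    have h2 := cos_nonneg_of_neg_pi_div_two_le_of_le (by linarith [hx.1, pi_pos]) hx.2.le
    have h3 : 0 ≤ π / 2 - x := by linarith [hx.2]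
    simp only [Pi.zero_apply, cot_eq_cos_div_sin]
    positivity
  · exact Measurable.aestronglyMeasurable (by fun_prop)
end
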